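/- arXiv:2406.00331 — 2 statements merged into one kernel-verified Lean document; each statement's English description precedes it below -/
import Mathlib

section
/- For every positive integer k, for each ρ ∈ [0,1) and each x ≥ 1 the series Σ_{n=0}^∞ (-1)^n ℓ_{n,k} L_n(log x) ρ^n converges absolutely, and for almost every x ≥ 1 (with respect to Lebesgue measure) one has Δ_k(x) = lim_{ρ→1⁻} Σ_{n=0}^∞ (-1)^n ℓ_{n,k} L_n(log x) ρ^n. -/
open scoped Real Topology
open Complex Filter MeasureTheory Finset Asymptotics

/-- The analytic extension of `s ↦ ((s-1) * ζ(s))^k` to `s = 1` (where its value is `1`). -/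
noncomputable def zetaPowAux (k : ℕ) : ℂ → ℂ :=
  Function.update (fun s : ℂ => ((s - 1) * riemannZeta s) ^ k) 1 1

/-- `lam k j` is the Taylor coefficient `λ_{j,k}`, i.e. the `j`-th derivative at `s = 1` of the
analytic extension of `(s-1)^k ζ(s)^k`; these numbers are real, and we record their real part. -/
noncomputable def lam (k j : ℕ) : ℝ :=
  (iteratedDeriv j (zetaPowAux k) 1).re

/-- The Fourier coefficients `ℓ_{n,k}` for `n ≥ -k` (an integer index). -/
noncomputable def ell (k : ℕ) (n : ℤ) : ℝ :=
  if 1 ≤ n then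
    (-1 : ℝ) ^ n.toNat *
      ∑ j ∈ Finset.Icc 1 n.toNat,
        ((n.toNat - 1).choose (j - 1) : ℝ) * lam k (j + k) / (Nat.factorial (j + k))
  else
    (-1 : ℝ) ^ k *
      ∑ j ∈ Finset.range ((k + n).toNat + 1),
        ((k - j).choose (-n).toNat : ℝ) * (-1 : ℝ) ^ j * lam k j / (Nat.factorial j)

/-- The Lindelöf Hypothesis: `ζ(1/2 + it) = O(|t|^ε)` for every `ε > 0`. -/
def LindelofHypothesis : Prop :=
  ∀ ε : ℝ, 0 < ε → ∃ C : ℝ, ∀ t : ℝ, 1 ≤ |t| →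
    ‖riemannZeta (1 / 2 + t * Complex.I)‖ ≤ C * |t| ^ ε

/-- `dk k n` is the Piltz divisor function `d_k(n)`: the number of representations of `n` as an
ordered product of `k` positive integers (the `k`-th Dirichlet-convolution power of `ζ`). -/
noncomputable def dk (k n : ℕ) : ℕ := (ArithmeticFunction.zeta ^ k) n

/-- The coefficients `a_{j,k}` of the polynomial `P_k`. -/
noncomputable def aCoef (k j : ℕ) : ℝ :=
  (-1 : ℝ) ^ (k - 1 - j) *
    ∑ i ∈ Finset.range (k - 1 - j + 1), (-1 : ℝ) ^ i * lam k i / (Nat.factorial i)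

/-- The error term `Δ_k(x) = (Σ_{1 ≤ n ≤ x} d_k(n)) - x P_k(log x)` in the Piltz divisor
problem. -/
noncomputable def Deltak (k : ℕ) (x : ℝ) : ℝ :=
  (∑ n ∈ Finset.Icc 1 ⌊x⌋₊, (dk k n : ℝ)) -
    x * ∑ j ∈ Finset.range k, aCoef k j / (Nat.factorial j) * (Real.log x) ^ j

/-- The `n`-th Laguerre polynomial. -/
noncomputable def laguerre (n : ℕ) (u : ℝ) : ℝ :=
  ∑ j ∈ Finset.range (n + 1), (n.choose j : ℝ) * (-1 : ℝ) ^ j * u ^ j / (Nat.factorial j)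

/-- The Bessel function of the first kind of order `0`. -/
noncomputable def besselJ0 (u : ℝ) : ℝ :=
  ∑' m : ℕ, (-1 : ℝ) ^ m * (u / 2) ^ (2 * m) / ((Nat.factorial m : ℝ) ^ 2)

/-- `φ_k(x) = ∫_1^∞ Δ_k(r) J₀(2 √(x log r)) r⁻² dr`. -/
noncomputable def phik (k : ℕ) (x : ℝ) : ℝ :=
  ∫ r in Set.Ioi (1 : ℝ), Deltak k r * besselJ0 (2 * Real.sqrt (x * Real.log r)) / r ^ 2

/-- The binomial transform `n ↦ ∑_{j ≤ n} C(n, j) β_j` of a real sequence. -/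
noncomputable def binomialTransform (β : ℕ → ℝ) (n : ℕ) : ℝ :=
  ∑ j ∈ Finset.range (n + 1), (n.choose j : ℝ) * β j

lemma abs_binomialTransform_le (β : ℕ → ℝ) (n : ℕ) :
    |binomialTransform β n| ≤ binomialTransform (fun j => |β j|) n := by
  refine (Finset.abs_sum_le_sum_abs _ _).trans (le_of_eq ?_)
  exact Finset.sum_congr rfl fun j _ => by rw [abs_mul, Nat.abs_cast]

lemma binomialTransform_abs_nonneg (β : ℕ → ℝ) (n : ℕ) :
    0 ≤ binomialTransform (fun j => |β j|) n :=
  Finset.sum_nonneg fun _ _ => by positivity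

lemma binomialTransform_pow (q : ℝ) (n : ℕ) :
    binomialTransform (fun j => q ^ j) n = (1 + q) ^ n := by
  rw [add_comm, add_pow]
  exact Finset.sum_congr rfl fun j _ => by ring

lemma binomialTransform_laguerre (u : ℝ) (n : ℕ) :
    binomialTransform (fun j => (-u) ^ j / (Nat.factorial j)) n = laguerre n u := by
  refine Finset.sum_congr rfl fun j _ => ?_
  rw [neg_pow]
  ring

lemma mul_binomialTransform_eq_sum_antidiagonal (α β : ℕ → ℝ) (n : ℕ) :
    α n * binomialTransform β n =
      ∑ p ∈ antidiagonal n, ((p.2 + p.1).choose p.1 : ℝ) * α (p.2 + p.1) * β p.1 := by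
  rw [binomialTransform, Finset.mul_sum,
    Finset.Nat.sum_antidiagonal_eq_sum_range_succ
      (fun i j => ((j + i).choose i : ℝ) * α (j + i) * β i)]
  refine Finset.sum_congr rfl fun j hj => ?_
  rw [Nat.sub_add_cancel (Nat.lt_succ_iff.1 (Finset.mem_range.1 hj))]
  ring

lemma hasSum_sum_antidiagonal {g : ℕ × ℕ → ℝ} (hg : Summable g) :
    HasSum (fun n => ∑ p ∈ antidiagonal n, g p) (∑' p, g p) := by
  have h := (Finset.HasAntidiagonal.sigmaAntidiagonalEquivProd (A := ℕ)).hasSum_iff.2 hg.hasSum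
  refine h.sigma fun n => ?_
  convert! hasSum_fintype _ using 1
  exact (Finset.sum_coe_sort (antidiagonal n) g).symm

lemma summable_prod_of_summable_antidiagonal {g : ℕ × ℕ → ℝ} (hg : 0 ≤ g)
    (h : Summable fun n => ∑ p ∈ antidiagonal n, g p) : Summable g := by
  rw [← (Finset.HasAntidiagonal.sigmaAntidiagonalEquivProd (A := ℕ)).summable_iff]
  refine (summable_sigma_of_nonneg fun x => hg _).2 ⟨fun n => (hasSum_fintype _).summable, ?_⟩
  refine h.congr fun n => ?_
  rw [tsum_fintype]
  exact (Finset.sum_coe_sort (antidiagonal n) g).symm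

/-- Interchange of summation in `∑ α_n ∑_{j ≤ n} C(n, j) β_j`. -/
lemma hasSum_mul_tsum_choose {α β : ℕ → ℝ}
    (h : Summable fun n => |α n| * binomialTransform (fun j => |β j|) n) :
    HasSum (fun j => β j * ∑' i, ((i + j).choose j : ℝ) * α (i + j))
      (∑' n, α n * binomialTransform β n) := by
  have hs : Summable fun p : ℕ × ℕ => ((p.2 + p.1).choose p.1 : ℝ) * α (p.2 + p.1) * β p.1 := by
    refine Summable.of_norm (summable_prod_of_summable_antidiagonal (fun _ => norm_nonneg _) ?_)
    refine h.congr fun n => ?_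
    rw [mul_binomialTransform_eq_sum_antidiagonal (fun n => |α n|)]
    refine Finset.sum_congr rfl fun p _ => ?_
    rw [norm_mul, norm_mul, Real.norm_natCast]
    rfl
  have h1 := hasSum_sum_antidiagonal hs
  simp_rw [← mul_binomialTransform_eq_sum_antidiagonal α β] at h1
  rw [h1.tsum_eq]
  refine hs.hasSum.prod_fiberwise fun j => ?_
  have := (hs.prod_factor j).hasSum
  rw [← tsum_mul_left]
  simpa only [mul_comm] using this

/-- Geometric weights: absolute convergence of `∑ t^n ∑_{j ≤ n} C(n, j) β_j`. -/
lemma summable_geometric_mul_binomialTransform {β : ℕ → ℝ} {t : ℝ} (ht0 : 0 ≤ t) (ht : t < 1)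
    (h : Summable fun j => |β j| * (t / (1 - t)) ^ j) :
    Summable fun n => t ^ n * binomialTransform (fun j => |β j|) n := by
  have hs : Summable fun p : ℕ × ℕ =>
      ((p.2 + p.1).choose p.1 : ℝ) * t ^ (p.2 + p.1) * |β p.1| := by
    have hj (j : ℕ) : HasSum (fun i => ((i + j).choose j : ℝ) * t ^ (i + j) * |β j|)
        (1 / (1 - t) ^ (j + 1) * (t ^ j * |β j|)) := by
      have := (hasSum_choose_mul_geometric_of_norm_lt_one j
        (r := t) (by rwa [Real.norm_of_nonneg ht0])).mul_right (t ^ j * |β j|)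
      refine this.congr_fun ?_
      intro i
      ring
    refine (summable_prod_of_nonneg fun p => by positivity).2
      ⟨fun j => (hj j).summable, ?_⟩
    simp only [(hj _).tsum_eq]
    refine (h.mul_left (1 / (1 - t))).congr fun j => ?_
    rw [div_pow, pow_succ]
    field_simp
  refine (hasSum_sum_antidiagonal hs).summable.congr fun n => ?_
  exact (mul_binomialTransform_eq_sum_antidiagonal (fun n => t ^ n) (fun j => |β j|) n).symm

lemma hasSum_geometric_mul_binomialTransform {β : ℕ → ℝ} {t : ℝ} (ht : |t| < 1)
    (h : Summable fun j => |β j| * (|t| / (1 - |t|)) ^ j) :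
    HasSum (fun j => β j * (t ^ j / (1 - t) ^ (j + 1))) (∑' n, t ^ n * binomialTransform β n) := by
  have := hasSum_mul_tsum_choose (α := fun n => t ^ n) (β := β)
    (by simpa only [abs_pow] using
      summable_geometric_mul_binomialTransform (abs_nonneg t) ht h)
  convert! this using 2 with j
  congr 1
  have h2 := (hasSum_choose_mul_geometric_of_norm_lt_one j (r := t) ht).mul_right (t ^ j)
  rw [div_eq_mul_one_div, mul_comm, ← h2.tsum_eq]
  exact tsum_congr fun i => by ring

lemma summable_abs_laguerre_mul_pow (u : ℝ) {r : ℝ} (hr0 : 0 ≤ r) (hr : r < 1) :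
    Summable fun n => r ^ n * binomialTransform (fun j => |(-u) ^ j / (Nat.factorial j)|) n := by
  refine summable_geometric_mul_binomialTransform hr0 hr ?_
  refine (Real.summable_pow_div_factorial (|u| * (r / (1 - r)))).congr fun j => ?_
  rw [abs_div, abs_pow, abs_neg, Nat.abs_cast, mul_pow]
  ring

/-- A sequence of radius of convergence at least one stays so after multiplication with the
absolute Laguerre values. -/
lemma summable_abs_mul_pow_mul_laguerre {c : ℕ → ℝ}
    (hc : ∀ r : ℝ, 0 ≤ r → r < 1 → Summable fun n => |c n| * r ^ n) (u : ℝ) {ρ : ℝ}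
    (hρ0 : 0 ≤ ρ) (hρ : ρ < 1) :
    Summable fun n => |c n * ρ ^ n| *
      binomialTransform (fun j => |(-u) ^ j / (Nat.factorial j)|) n := by
  have hr1 : √ρ < 1 := by rw [Real.sqrt_lt' one_pos]; simpa using hρ
  have h1 := hc (√ρ) (Real.sqrt_nonneg _) hr1
  have h2 := summable_abs_laguerre_mul_pow u (Real.sqrt_nonneg ρ) hr1
  refine (Summable.of_nonneg_of_le (fun n => ?_) (fun n => ?_) (h1.mul_right
    (∑' n, √ρ ^ n * binomialTransform (fun j => |(-u) ^ j / (Nat.factorial j)|) n)))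
  · exact mul_nonneg (abs_nonneg _) (binomialTransform_abs_nonneg _ _)
  · have hle := h2.le_tsum n fun m _ =>
      mul_nonneg (pow_nonneg (Real.sqrt_nonneg ρ) m) (binomialTransform_abs_nonneg _ m)
    have he : ρ ^ n = √ρ ^ n * √ρ ^ n := by rw [← mul_pow, Real.mul_self_sqrt hρ0]
    rw [abs_mul, abs_of_nonneg (pow_nonneg hρ0 n), he]
    calc _ = (|c n| * √ρ ^ n) *
          (√ρ ^ n * binomialTransform (fun j => |(-u) ^ j / (Nat.factorial j)|) n) := by ring
      _ ≤ _ := mul_le_mul_of_nonneg_left hle (by positivity)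

lemma eq_of_hasSum_pow_eventually {a b : ℕ → ℝ} {f : ℝ → ℝ}
    (ha : ∀ᶠ h in 𝓝 (0 : ℝ), HasSum (fun j => h ^ j * a j) (f h))
    (hb : ∀ᶠ h in 𝓝 (0 : ℝ), HasSum (fun j => h ^ j * b j) (f h)) : a = b := by
  have key (a : ℕ → ℝ) (ha : ∀ᶠ h in 𝓝 (0 : ℝ), HasSum (fun j => h ^ j * a j) (f h)) :
      HasFPowerSeriesAt f (FormalMultilinearSeries.ofScalars ℝ a) 0 := by
    rw [hasFPowerSeriesAt_iff]
    simpa only [FormalMultilinearSeries.coeff_ofScalars, smul_eq_mul, zero_add] using ha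
  have h := (key a ha).eq_formalMultilinearSeries (key b hb)
  funext n
  simpa only [FormalMultilinearSeries.coeff_ofScalars] using
    congrArg (fun p => FormalMultilinearSeries.coeff p n) h

lemma tsum_choose_mul_pow_div_factorial (l : ℝ) (m : ℕ) :
    ∑' i : ℕ, ((i + m).choose m : ℝ) * ((-l) ^ (i + m) / (Nat.factorial (i + m))) =
      (-l) ^ m / (Nat.factorial m) * Real.exp (-l) := by
  rw [Real.exp_eq_exp_ℝ, NormedSpace.exp_eq_tsum_div, ← tsum_mul_left]
  refine tsum_congr fun i => ?_
  have h := Nat.add_choose_mul_factorial_mul_factorial i m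
  have h' : ((i + m).choose m : ℝ) * i.factorial * m.factorial = (i + m).factorial := by
    exact_mod_cast h
  rw [← h', pow_add]
  have := Nat.factorial_pos i
  have := Nat.factorial_pos m
  have : 0 < (i + m).choose m := Nat.choose_pos (Nat.le_add_left m i)
  field_simp

/-- The Abel means of a Laguerre series as a Poisson average of normalised moments. -/
lemma hasSum_poisson_of_expansion {c A : ℕ → ℝ} {s C q : ℝ} (hs : 1 < s) (hq : 0 ≤ q)
    (hc : ∀ r : ℝ, 0 ≤ r → r < 1 → Summable fun n => |c n| * r ^ n)
    (hA : ∀ m, |A m| ≤ C * q ^ m)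
    (hcA : ∀ᶠ h in 𝓝 (0 : ℝ), ∑' n, c n * (1 - 1 / s + h) ^ n =
      ∑' m, (-1) ^ m * A m * ((s * h) ^ m / (1 - s * h) ^ (m + 1))) (u : ℝ) :
    HasSum (fun m => (u * (s - 1)) ^ m / (Nat.factorial m) * Real.exp (-(u * (s - 1))) * A m)
      (∑' n, c n * laguerre n u * (1 - 1 / s) ^ n) := by
  set ρ : ℝ := 1 - 1 / s with hρ
  have hs0 : 0 < s := by linarith
  have hρs : s * ρ = s - 1 := by rw [hρ]; field_simp
  have hρ1 : ρ < 1 := by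
    have : 0 < 1 / s := by positivity
    linarith
  have hρ0 : 0 < ρ := by
    rw [hρ, sub_pos, div_lt_one hs0]; exact hs
  set B : ℕ → ℝ := fun m => (-1) ^ m * A m with hB
  have hBabs (m : ℕ) : |B m| ≤ C * q ^ m := by simpa [hB, abs_mul] using hA m
  have hBT (n : ℕ) : binomialTransform (fun j => |B j|) n ≤ C * (1 + q) ^ n := by
    rw [← binomialTransform_pow, binomialTransform, binomialTransform, Finset.mul_sum]
    refine Finset.sum_le_sum fun j _ => ?_
    rw [mul_left_comm]
    exact mul_le_mul_of_nonneg_left (hBabs j) (Nat.cast_nonneg _)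
  set U : ℕ → ℝ := fun j => ∑' i, ((i + j).choose j : ℝ) * (c (i + j) * ρ ^ (i + j)) with hU
  have key : (fun j => U j / ρ ^ j) = fun j => s ^ j * binomialTransform B j := by
    refine eq_of_hasSum_pow_eventually (f := fun h => ∑' n, c n * (ρ + h) ^ n) ?_ ?_
    · have : ∀ᶠ h in 𝓝 (0 : ℝ), |h| < 1 - ρ := by
        have : Tendsto (fun h : ℝ => |h|) (𝓝 0) (𝓝 0) := by
          simpa using (continuous_abs.tendsto (0 : ℝ))
        exact this.eventually_lt_const (by linarith)
      filter_upwards [this] with h hh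
      have := hasSum_mul_tsum_choose (α := fun n => c n * ρ ^ n) (β := fun j => (h / ρ) ^ j) ?_
      · convert! this using 1
        · funext j
          rw [div_pow]
          ring
        · refine tsum_congr fun n => ?_
          rw [binomialTransform_pow, mul_assoc, ← mul_pow]
          congr 2
          field_simp
      · refine (hc (ρ + |h|) (by positivity) (by linarith)).congr fun n => ?_
        simp_rw [abs_pow]
        rw [binomialTransform_pow, abs_mul, abs_pow, mul_assoc, ← mul_pow, abs_div,
          abs_of_pos hρ0]
        congr 2
        field_simp
    · have h1 : Tendsto (fun h : ℝ => |s * h|) (𝓝 0) (𝓝 0) := by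
        have : Continuous fun h : ℝ => |s * h| := by fun_prop
        simpa using this.tendsto 0
      have h2 : Tendsto (fun h : ℝ => q * (|s * h| / (1 - |s * h|))) (𝓝 0) (𝓝 0) := by
        simpa using (h1.div (h1.const_sub 1) (by norm_num)).const_mul q
      have h3 : Tendsto (fun h : ℝ => |s * h| * (1 + q)) (𝓝 0) (𝓝 0) := by
        simpa using h1.mul_const (1 + q)
      filter_upwards [hcA, h1.eventually_lt_const one_pos, h2.eventually_lt_const one_pos,
        h3.eventually_lt_const one_pos] with h hh hh1 hh2 hh3
      have hsum : Summable fun j => |B j| * (|s * h| / (1 - |s * h|)) ^ j := by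
        have hnn : 0 ≤ |s * h| / (1 - |s * h|) := div_nonneg (abs_nonneg _) (by linarith)
        refine Summable.of_nonneg_of_le (fun j => by positivity) (fun j => ?_)
          ((summable_geometric_of_lt_one (mul_nonneg hq hnn) hh2).mul_left C)
        rw [mul_pow, ← mul_assoc]
        exact mul_le_mul_of_nonneg_right (hBabs j) (by positivity)
      have hs2 : Summable fun n => (s * h) ^ n * binomialTransform B n := by
        refine Summable.of_norm_bounded
          ((summable_geometric_of_lt_one (by positivity) hh3).mul_left C) fun n => ?_
        rw [norm_mul, norm_pow, Real.norm_eq_abs, Real.norm_eq_abs, mul_pow, mul_left_comm]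
        exact mul_le_mul_of_nonneg_left ((abs_binomialTransform_le B n).trans (hBT n))
          (by positivity)
      rw [hh, (hasSum_geometric_mul_binomialTransform hh1 hsum).tsum_eq]
      convert! hs2.hasSum using 2 with j
      rw [mul_pow]
      ring
  have h1 := hasSum_mul_tsum_choose (summable_abs_mul_pow_mul_laguerre hc u hρ0.le hρ1)
  simp_rw [binomialTransform_laguerre] at h1
  have hUj (j : ℕ) : U j = (s * ρ) ^ j * binomialTransform B j := by
    have : U j / ρ ^ j = s ^ j * binomialTransform B j := congrFun key j
    rw [div_eq_iff (by positivity)] at this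
    rw [this, mul_pow]
    ring
  have h2 := hasSum_mul_tsum_choose
    (α := fun n => (-(u * (s - 1))) ^ n / (Nat.factorial n)) (β := B) ?_
  · have e1 : (∑' n, (-(u * (s - 1))) ^ n / (Nat.factorial n) * binomialTransform B n) =
        ∑' n, c n * laguerre n u * ρ ^ n := by
      rw [tsum_congr fun n => (show c n * laguerre n u * ρ ^ n = c n * ρ ^ n * laguerre n u by ring),
        ← h1.tsum_eq]
      refine tsum_congr fun n => ?_
      change _ = _ * U n
      rw [hUj, hρs, neg_mul_eq_neg_mul, mul_pow]
      ring
    rw [e1] at h2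
    convert! h2 using 2 with m
    rw [tsum_choose_mul_pow_div_factorial, hB, neg_pow (u * (s - 1))]
    have : ((-1 : ℝ) ^ m) * (-1) ^ m = 1 := by rw [← mul_pow]; simp
    linear_combination (-(u * (s - 1)) ^ m / (Nat.factorial m) * Real.exp (-(u * (s - 1))) * A m) *
      this
  · refine Summable.of_nonneg_of_le
      (fun n => mul_nonneg (abs_nonneg _) (binomialTransform_abs_nonneg _ _)) (fun n => ?_)
      ((Real.summable_pow_div_factorial (|u * (s - 1)| * (1 + q))).mul_left C)
    rw [abs_div, abs_pow, abs_neg, Nat.abs_cast, mul_pow]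
    calc _ ≤ |u * (s - 1)| ^ n / (Nat.factorial n) * (C * (1 + q) ^ n) :=
          mul_le_mul_of_nonneg_left (hBT n) (by positivity)
      _ = _ := by ring

lemma image_exp_Ioi_zero : Real.exp '' Set.Ioi 0 = Set.Ioi 1 := by
  ext y
  constructor
  · rintro ⟨x, hx, rfl⟩
    exact Real.one_lt_exp_iff.2 hx
  · intro hy
    exact ⟨Real.log y, Real.log_pos hy, Real.exp_log (one_pos.trans hy)⟩

lemma exp_mul_log_pow_mul_rpow_exp (s : ℝ) (m : ℕ) (x : ℝ) :
    |Real.exp x| • ((Real.log (Real.exp x)) ^ m * Real.exp x ^ (-s - 1)) =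
      x ^ ((m : ℝ) + 1 - 1) * Real.exp (-(s * x)) := by
  rw [Real.log_exp, ← Real.exp_mul, abs_of_pos (Real.exp_pos x), smul_eq_mul, mul_left_comm,
    ← Real.exp_add, add_sub_cancel_right, Real.rpow_natCast]
  congr 2
  ring

lemma integrableOn_log_pow_mul_rpow {s : ℝ} (hs : 0 < s) (m : ℕ) :
    IntegrableOn (fun x : ℝ => (Real.log x) ^ m * x ^ (-s - 1)) (Set.Ioi 1) := by
  rw [← image_exp_Ioi_zero, integrableOn_image_iff_integrableOn_abs_deriv_smul measurableSet_Ioi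
    (fun x _ => (Real.hasDerivAt_exp x).hasDerivWithinAt) Real.exp_injective.injOn]
  simp_rw [exp_mul_log_pow_mul_rpow_exp]
  have h := integrableOn_rpow_mul_exp_neg_mul_rpow (p := 1) (s := (m : ℝ) + 1 - 1) (b := s)
    (by have : (0 : ℝ) ≤ m := m.cast_nonneg
        linarith) one_pos hs
  simpa using h

lemma integral_log_pow_mul_rpow {s : ℝ} (hs : 0 < s) (m : ℕ) :
    ∫ x in Set.Ioi (1 : ℝ), (Real.log x) ^ m * x ^ (-s - 1) =
      (Nat.factorial m) / s ^ (m + 1) := by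
  rw [← image_exp_Ioi_zero, integral_image_eq_integral_abs_deriv_smul measurableSet_Ioi
    (fun x _ => (Real.hasDerivAt_exp x).hasDerivWithinAt) Real.exp_injective.injOn]
  simp_rw [exp_mul_log_pow_mul_rpow_exp]
  rw [Real.integral_rpow_mul_exp_neg_mul_Ioi (by positivity) hs, Real.Gamma_nat_eq_factorial]
  norm_cast
  rw [one_div, inv_pow]
  ring

/-- The normalised moment `s^(m+1)/m! ∫_1^∞ f(x) (log x)^m x^(-s-1) dx`. -/
noncomputable def logMoment (f : ℝ → ℝ) (s : ℝ) (m : ℕ) : ℝ :=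
  s ^ (m + 1) / (Nat.factorial m) *
    ∫ x in Set.Ioi (1 : ℝ), f x * ((Real.log x) ^ m * x ^ (-s - 1))

lemma pow_mul_log_pow_mul_rpow (a m : ℕ) (s : ℝ) {x : ℝ} (hx : x ∈ Set.Ioi (1 : ℝ)) :
    x ^ a * ((Real.log x) ^ m * x ^ (-s - 1)) = (Real.log x) ^ m * x ^ (-(s - a) - 1) := by
  have hx0 : 0 < x := one_pos.trans hx
  rw [mul_left_comm, ← Real.rpow_natCast x a, ← Real.rpow_add hx0]
  congr 2
  ring

lemma integrableOn_pow_mul {s : ℝ} (a m : ℕ) (hs : a < s) :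
    IntegrableOn (fun x : ℝ => x ^ a * ((Real.log x) ^ m * x ^ (-s - 1))) (Set.Ioi 1) :=
  (integrableOn_log_pow_mul_rpow (sub_pos.2 hs) m).congr_fun
    (fun _ hx => (pow_mul_log_pow_mul_rpow a m s hx).symm) measurableSet_Ioi

lemma integral_pow_mul {s : ℝ} (a m : ℕ) (hs : a < s) :
    ∫ x in Set.Ioi (1 : ℝ), x ^ a * ((Real.log x) ^ m * x ^ (-s - 1)) =
      (Nat.factorial m) / (s - a) ^ (m + 1) := by
  rw [← integral_log_pow_mul_rpow (sub_pos.2 hs) m]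
  exact setIntegral_congr_fun measurableSet_Ioi fun _ hx => pow_mul_log_pow_mul_rpow a m s hx

lemma logMoment_pow {s : ℝ} (a m : ℕ) (hs : a < s) :
    logMoment (fun x => x ^ a) s m = (s / (s - a)) ^ (m + 1) := by
  have := Nat.factorial_pos m
  have h : s - a ≠ 0 := (sub_pos.2 hs).ne'
  rw [logMoment, integral_pow_mul a m hs, div_pow]
  field_simp

section Moments

variable {f : ℝ → ℝ} {C s : ℝ}

lemma log_pow_mul_rpow_nonneg (m : ℕ) (s : ℝ) {x : ℝ} (hx : x ∈ Set.Ioi (1 : ℝ)) :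
    0 ≤ (Real.log x) ^ m * x ^ (-s - 1) :=
  mul_nonneg (pow_nonneg (Real.log_nonneg (le_of_lt hx)) _)
    (Real.rpow_nonneg (one_pos.trans hx).le _)

lemma norm_mul_log_pow_le (hC : ∀ x, 1 ≤ x → |f x| ≤ C * x ^ 2) (m : ℕ) (s : ℝ) {x : ℝ}
    (hx : x ∈ Set.Ioi (1 : ℝ)) :
    ‖f x * ((Real.log x) ^ m * x ^ (-s - 1))‖ ≤
      C * (x ^ 2 * ((Real.log x) ^ m * x ^ (-s - 1))) := by
  have h0 := log_pow_mul_rpow_nonneg m s hx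
  rw [norm_mul, Real.norm_of_nonneg h0, ← mul_assoc C]
  exact mul_le_mul_of_nonneg_right (hC x (le_of_lt hx)) h0

lemma integrableOn_mul_log_pow (hf : Measurable f) (hC : ∀ x, 1 ≤ x → |f x| ≤ C * x ^ 2)
    (hs : 2 < s) (m : ℕ) :
    IntegrableOn (fun x => f x * ((Real.log x) ^ m * x ^ (-s - 1))) (Set.Ioi 1) := by
  refine Integrable.mono' ((integrableOn_pow_mul 2 m (s := s) (by exact_mod_cast hs)).const_mul C)
    ?_ ?_
  · exact (hf.mul ((Real.measurable_log.pow_const m).mul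
      (measurable_id.pow_const _))).aestronglyMeasurable
  · exact (ae_restrict_mem measurableSet_Ioi).mono fun x hx => norm_mul_log_pow_le hC m s hx

lemma integral_norm_mul_log_pow_le (hf : Measurable f) (hC : ∀ x, 1 ≤ x → |f x| ≤ C * x ^ 2)
    (hs : 2 < s) (m : ℕ) :
    ∫ x in Set.Ioi (1 : ℝ), ‖f x * ((Real.log x) ^ m * x ^ (-s - 1))‖ ≤
      C * ((Nat.factorial m) / (s - 2) ^ (m + 1)) := by
  have h2 : ((2 : ℕ) : ℝ) < s := by exact_mod_cast hs
  have := integral_pow_mul 2 m h2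
  push_cast at this
  rw [← this, ← integral_const_mul]
  exact setIntegral_mono_on (integrableOn_mul_log_pow hf hC hs m).norm
    ((integrableOn_pow_mul 2 m h2).const_mul C) measurableSet_Ioi
    fun x hx => norm_mul_log_pow_le hC m s hx

lemma abs_logMoment_le (hf : Measurable f) (hC : ∀ x, 1 ≤ x → |f x| ≤ C * x ^ 2)
    (hs : 2 < s) (m : ℕ) :
    |logMoment f s m| ≤ C * (s / (s - 2)) * (s / (s - 2)) ^ m := by
  have hs0 : 0 < s := by linarith
  have hs2 : 0 < s - 2 := by linarith
  have := Nat.factorial_pos m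
  rw [logMoment, abs_mul, abs_of_nonneg (by positivity)]
  calc _ ≤ s ^ (m + 1) / (Nat.factorial m) * (C * ((Nat.factorial m) / (s - 2) ^ (m + 1))) :=
        mul_le_mul_of_nonneg_left ((norm_integral_le_integral_norm _).trans
          (integral_norm_mul_log_pow_le hf hC hs m)) (by positivity)
    _ = _ := by
      rw [mul_assoc, ← pow_succ', div_pow]
      field_simp

lemma hasSum_logMoment (hf : Measurable f) (hC : ∀ x, 1 ≤ x → |f x| ≤ C * x ^ 2)
    (hs : 2 < s) {t : ℝ} (ht : |t - s| < s - 2) :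
    HasSum (fun m => (-((t - s) / s)) ^ m * logMoment f s m)
      (s * ∫ x in Set.Ioi (1 : ℝ), f x * x ^ (-t - 1)) := by
  have hs0 : 0 < s := by linarith
  have hs2 : 0 < s - 2 := by linarith
  set F : ℕ → ℝ → ℝ := fun m x =>
    (-(t - s)) ^ m / (Nat.factorial m) * (f x * ((Real.log x) ^ m * x ^ (-s - 1))) with hF
  have h := hasSum_integral_of_summable_integral_norm (μ := volume.restrict (Set.Ioi (1 : ℝ)))
    (F := F) (fun m => (integrableOn_mul_log_pow hf hC hs m).const_mul _) ?_
  · have e : (∫ x in Set.Ioi (1 : ℝ), ∑' m, F m x) =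
        ∫ x in Set.Ioi (1 : ℝ), f x * x ^ (-t - 1) := by
      refine setIntegral_congr_fun measurableSet_Ioi fun x hx => ?_
      have hx0 : 0 < x := one_pos.trans hx
      have h1 : HasSum (fun m : ℕ => (-(t - s) * Real.log x) ^ m / (Nat.factorial m))
          (Real.exp (-(t - s) * Real.log x)) := by
        rw [Real.exp_eq_exp_ℝ]
        exact NormedSpace.expSeries_div_hasSum_exp _
      have h2 := h1.mul_right (f x * x ^ (-s - 1))
      have h3 : Real.exp (-(t - s) * Real.log x) * (f x * x ^ (-s - 1)) = f x * x ^ (-t - 1) := by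
        rw [mul_comm (-(t - s)), ← Real.rpow_def_of_pos hx0, mul_left_comm, ← Real.rpow_add hx0]
        congr 2
        ring
      rw [h3] at h2
      simp only [hF]
      rw [← h2.tsum_eq]
      refine tsum_congr fun m => ?_
      rw [mul_pow]
      ring
    rw [e] at h
    refine (h.mul_left s).congr_fun fun m => ?_
    simp only [hF]
    rw [integral_const_mul, logMoment, ← neg_div, div_pow, pow_succ]
    field_simp
  · have hq : |t - s| / (s - 2) < 1 := (div_lt_one hs2).2 ht
    refine Summable.of_nonneg_of_le (fun m => integral_nonneg fun _ => norm_nonneg _) (fun m => ?_)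
      ((summable_geometric_of_lt_one (by positivity) hq).mul_left (C / (s - 2)))
    simp only [hF, norm_mul _ (f _ * _)]
    rw [integral_const_mul, norm_div, norm_pow, Real.norm_eq_abs, abs_neg, Real.norm_natCast]
    have := Nat.factorial_pos m
    calc _ ≤ |t - s| ^ m / (Nat.factorial m) * (C * ((Nat.factorial m) / (s - 2) ^ (m + 1))) :=
          mul_le_mul_of_nonneg_left (integral_norm_mul_log_pow_le hf hC hs m) (by positivity)
      _ = _ := by
        rw [div_pow, pow_succ]
        field_simp

/-- The Abel means in terms of the normalised moments. -/
lemma hasSum_poisson_logMoment (hf : Measurable f) (hC : ∀ x, 1 ≤ x → |f x| ≤ C * x ^ 2)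
    (hs : 2 < s) {c : ℕ → ℝ}
    (hc : ∀ r : ℝ, 0 ≤ r → r < 1 → Summable fun n => |c n| * r ^ n)
    (hcf : ∀ t : ℝ, 2 < t →
      ∑' n, c n * (1 - 1 / t) ^ n = t * ∫ x in Set.Ioi (1 : ℝ), f x * x ^ (-t - 1)) (u : ℝ) :
    HasSum (fun m => (u * (s - 1)) ^ m / (Nat.factorial m) * Real.exp (-(u * (s - 1))) *
        logMoment f s m)
      (∑' n, c n * laguerre n u * (1 - 1 / s) ^ n) := by
  have hs0 : 0 < s := by linarith
  refine hasSum_poisson_of_expansion (by linarith)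
    (div_nonneg hs0.le (by linarith : 0 ≤ s - 2)) hc (abs_logMoment_le hf hC hs) ?_ u
  have h1 : Tendsto (fun h : ℝ => 1 - s * h) (𝓝 0) (𝓝 1) := by
    have : Continuous fun h : ℝ => 1 - s * h := by fun_prop
    simpa using this.tendsto 0
  have h2 : Tendsto (fun h : ℝ => s / (1 - s * h)) (𝓝 0) (𝓝 s) := by
    have := (tendsto_const_nhds (x := s)).div h1 one_ne_zero
    rwa [div_one] at this
  have h3 : Tendsto (fun h : ℝ => |s / (1 - s * h) - s|) (𝓝 0) (𝓝 0) := by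
    simpa using (h2.sub_const s).abs
  filter_upwards [h1.eventually_const_lt one_pos, h2.eventually_const_lt hs,
    h3.eventually_lt_const (sub_pos.2 hs)] with h hh1 hh2 hh3
  set t := s / (1 - s * h) with ht
  have e1 : 1 - 1 / s + h = 1 - 1 / t := by rw [ht]; field_simp; ring
  have h4 := (hasSum_logMoment hf hC hs hh3).mul_left (t / s)
  rw [← mul_assoc, div_mul_cancel₀ _ hs0.ne'] at h4
  rw [e1, hcf t hh2, ← h4.tsum_eq]
  refine tsum_congr fun m => ?_
  have e2 : (t - s) / s = s * h / (1 - s * h) := by rw [ht]; field_simp; ring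
  have e3 : t / s = 1 / (1 - s * h) := by rw [ht]; field_simp
  rw [e2, e3, neg_pow, div_pow, pow_succ]
  field_simp

end Moments

section AbelLimit

variable {f : ℝ → ℝ} {C s : ℝ}

lemma exists_abs_sub_le_of_continuousAt (hC : ∀ x, 1 ≤ x → |f x| ≤ C * x ^ 2) {x₀ : ℝ}
    (hx₀ : 1 ≤ x₀) (hcont : ContinuousAt f x₀) {ε : ℝ} (hε : 0 < ε) :
    ∃ M : ℝ, ∀ x, 1 ≤ x → |f x - f x₀| ≤ ε + M * (x ^ 2 * (x - x₀) ^ 2) := by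
  obtain ⟨δ, hδ, h⟩ := Metric.continuousAt_iff.1 hcont ε hε
  have hC0 : 0 ≤ C := by simpa using (abs_nonneg _).trans (hC 1 le_rfl)
  refine ⟨C * (1 + x₀ ^ 2) / δ ^ 2, fun x hx => ?_⟩
  rcases lt_or_ge (dist x x₀) δ with hd | hd
  · have := h hd
    rw [Real.dist_eq] at this
    have h0 : 0 ≤ C * (1 + x₀ ^ 2) / δ ^ 2 * (x ^ 2 * (x - x₀) ^ 2) := by positivity
    linarith
  · rw [Real.dist_eq] at hd
    have h1 : δ ^ 2 ≤ (x - x₀) ^ 2 := by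
      rw [← sq_abs (x - x₀)]
      exact pow_le_pow_left₀ hδ.le hd 2
    have h2 : |f x - f x₀| ≤ C * (1 + x₀ ^ 2) * x ^ 2 := by
      have h3 : C * x₀ ^ 2 ≤ C * x₀ ^ 2 * x ^ 2 := by
        have : (1 : ℝ) ≤ x ^ 2 := one_le_pow₀ hx
        nlinarith [mul_nonneg hC0 (sq_nonneg x₀)]
      have := abs_sub (f x) (f x₀)
      have := hC x hx
      have := hC x₀ hx₀
      nlinarith
    have h4 : C * (1 + x₀ ^ 2) * x ^ 2 ≤
        C * (1 + x₀ ^ 2) / δ ^ 2 * (x ^ 2 * (x - x₀) ^ 2) := by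
      calc _ = C * (1 + x₀ ^ 2) / δ ^ 2 * (x ^ 2 * δ ^ 2) := by field_simp
        _ ≤ _ := by gcongr
    linarith

lemma abs_logMoment_sub_le (hf : Measurable f) (hC : ∀ x, 1 ≤ x → |f x| ≤ C * x ^ 2)
    {x₀ y ε M : ℝ}
    (hM : ∀ x, 1 ≤ x → |f x - y| ≤ ε + M * (x ^ 2 * (x - x₀) ^ 2)) (hs : 4 < s) (m : ℕ) :
    |logMoment f s m - y| ≤ ε + M * ((s / (s - 4)) ^ (m + 1) -
      2 * x₀ * (s / (s - 3)) ^ (m + 1) + x₀ ^ 2 * (s / (s - 2)) ^ (m + 1)) := by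
  have hs0 : 0 < s := by linarith
  have l0 := logMoment_pow (s := s) 0 m (by push_cast; linarith)
  have l2 := logMoment_pow (s := s) 2 m (by push_cast; linarith)
  have l3 := logMoment_pow (s := s) 3 m (by push_cast; linarith)
  have l4 := logMoment_pow (s := s) 4 m (by push_cast; linarith)
  have i0 := integrableOn_pow_mul (s := s) 0 m (by push_cast; linarith)
  have i2 := integrableOn_pow_mul (s := s) 2 m (by push_cast; linarith)
  have i3 := integrableOn_pow_mul (s := s) 3 m (by push_cast; linarith)
  have i4 := integrableOn_pow_mul (s := s) 4 m (by push_cast; linarith)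
  have iff := integrableOn_mul_log_pow hf hC (by linarith : 2 < s) m
  push_cast at l0 l2 l3 l4
  rw [sub_zero, div_self hs0.ne', one_pow] at l0
  have hle : |(∫ x in Set.Ioi (1 : ℝ), f x * ((Real.log x) ^ m * x ^ (-s - 1))) -
      y * ∫ x in Set.Ioi (1 : ℝ), x ^ 0 * ((Real.log x) ^ m * x ^ (-s - 1))| ≤
      ε * (∫ x in Set.Ioi (1 : ℝ), x ^ 0 * ((Real.log x) ^ m * x ^ (-s - 1))) +
      M * ((∫ x in Set.Ioi (1 : ℝ), x ^ 4 * ((Real.log x) ^ m * x ^ (-s - 1))) -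
        2 * x₀ * (∫ x in Set.Ioi (1 : ℝ), x ^ 3 * ((Real.log x) ^ m * x ^ (-s - 1))) +
        x₀ ^ 2 * ∫ x in Set.Ioi (1 : ℝ), x ^ 2 * ((Real.log x) ^ m * x ^ (-s - 1))) := by
    have j34 : IntegrableOn (fun x : ℝ => x ^ 4 * ((Real.log x) ^ m * x ^ (-s - 1)) -
        2 * x₀ * (x ^ 3 * ((Real.log x) ^ m * x ^ (-s - 1)))) (Set.Ioi 1) :=
      i4.sub (i3.const_mul (2 * x₀))
    have j2 := i2.const_mul (x₀ ^ 2)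
    have j : IntegrableOn (fun x : ℝ => M * (x ^ 4 * ((Real.log x) ^ m * x ^ (-s - 1)) -
        2 * x₀ * (x ^ 3 * ((Real.log x) ^ m * x ^ (-s - 1))) +
        x₀ ^ 2 * (x ^ 2 * ((Real.log x) ^ m * x ^ (-s - 1))))) (Set.Ioi 1) :=
      (j34.add j2).const_mul M
    rw [← integral_const_mul, ← integral_const_mul, ← integral_const_mul, ← integral_const_mul,
      ← integral_sub iff (i0.const_mul y), ← integral_sub i4 (i3.const_mul (2 * x₀)),
      ← integral_add j34 j2, ← integral_const_mul,
      ← integral_add (i0.const_mul ε) j]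
    refine (norm_integral_le_integral_norm _).trans (setIntegral_mono_on
      (iff.sub (i0.const_mul y)).norm ((i0.const_mul ε).add j)
      measurableSet_Ioi fun x hx => ?_)
    have h0 := log_pow_mul_rpow_nonneg m s hx
    have := mul_le_mul_of_nonneg_right (hM x (le_of_lt hx)) h0
    set w := (Real.log x) ^ m * x ^ (-s - 1)
    calc _ = |f x - y| * w := by
          rw [Real.norm_eq_abs, ← abs_of_nonneg h0, ← abs_mul]
          simp only [w, Pi.sub_apply]
          congr 1
          ring
      _ ≤ _ := this
      _ = _ := by
        simp only [Pi.add_apply]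
        ring
  have hk : 0 ≤ s ^ (m + 1) / (Nat.factorial m : ℝ) := by positivity
  have := mul_le_mul_of_nonneg_left hle hk
  have hy : y = y * logMoment (fun x => x ^ 0) s m := by rw [l0, mul_one]
  have he : ε = ε * logMoment (fun x => x ^ 0) s m := by rw [l0, mul_one]
  rw [← l2, ← l3, ← l4, hy, he]
  simp only [logMoment]
  rw [← abs_of_nonneg hk, ← abs_mul, abs_of_nonneg hk] at this
  convert! this using 1
  · congr 1
    ring
  · ring

lemma hasSum_poisson_pow (l q : ℝ) :
    HasSum (fun m : ℕ => l ^ m / (Nat.factorial m) * Real.exp (-l) * q ^ (m + 1))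
      (q * Real.exp (l * (q - 1))) := by
  have h : HasSum (fun m : ℕ => (l * q) ^ m / (Nat.factorial m)) (Real.exp (l * q)) := by
    rw [Real.exp_eq_exp_ℝ]
    exact NormedSpace.expSeries_div_hasSum_exp _
  have := h.mul_left (q * Real.exp (-l))
  rw [mul_assoc, ← Real.exp_add] at this
  convert! this using 1
  · funext m
    rw [mul_pow, pow_succ]
    ring
  · congr 2
    ring

lemma tendsto_poisson_pow {x₀ : ℝ} (hx₀ : 1 ≤ x₀) (a : ℕ) :
    Tendsto (fun s : ℝ => s / (s - a) *
      Real.exp (Real.log x₀ * (s - 1) * (s / (s - a) - 1))) atTop (𝓝 (x₀ ^ a)) := by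
  have hinv : Tendsto (fun s : ℝ => (s - a)⁻¹) atTop (𝓝 0) :=
    tendsto_inv_atTop_zero.comp (tendsto_atTop_add_const_right _ _ tendsto_id)
  have h1 : Tendsto (fun s : ℝ => 1 + a * (s - a)⁻¹) atTop (𝓝 1) := by
    simpa using (hinv.const_mul (a : ℝ)).const_add 1
  have h2 : Tendsto (fun s : ℝ => Real.log x₀ * a * (1 + (a - 1) * (s - a)⁻¹)) atTop
      (𝓝 (Real.log x₀ * a)) := by
    simpa using ((hinv.const_mul ((a : ℝ) - 1)).const_add 1).const_mul (Real.log x₀ * a)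
  have h3 := h1.mul ((Real.continuous_exp.tendsto _).comp h2)
  rw [one_mul, mul_comm, Real.exp_nat_mul, Real.exp_log (by linarith)] at h3
  refine h3.congr' ?_
  filter_upwards [eventually_gt_atTop (a : ℝ)] with s hs
  have : s - a ≠ 0 := (sub_pos.2 hs).ne'
  simp only [Function.comp]
  congr 1
  · field_simp
    ring
  · congr 1
    field_simp
    ring

/-- Abel summation of a Laguerre series at a point of continuity. -/
theorem tendsto_laguerre_abel (hf : Measurable f) (hC : ∀ x, 1 ≤ x → |f x| ≤ C * x ^ 2)
    {c : ℕ → ℝ} (hc : ∀ r : ℝ, 0 ≤ r → r < 1 → Summable fun n => |c n| * r ^ n)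
    (hcf : ∀ t : ℝ, 2 < t →
      ∑' n, c n * (1 - 1 / t) ^ n = t * ∫ x in Set.Ioi (1 : ℝ), f x * x ^ (-t - 1))
    {x₀ : ℝ} (hx₀ : 1 ≤ x₀) (hcont : ContinuousAt f x₀) :
    Tendsto (fun ρ : ℝ => ∑' n, c n * laguerre n (Real.log x₀) * ρ ^ n) (𝓝[<] 1)
      (𝓝 (f x₀)) := by
  set u := Real.log x₀ with hu
  have hu0 : 0 ≤ u := Real.log_nonneg hx₀
  have main : Tendsto (fun s : ℝ => ∑' n, c n * laguerre n u * (1 - 1 / s) ^ n) atTop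
      (𝓝 (f x₀)) := by
    rw [Metric.tendsto_nhds]
    intro ε hε
    obtain ⟨M, hM⟩ := exists_abs_sub_le_of_continuousAt hC hx₀ hcont (half_pos hε)
    have hlim := ((((tendsto_poisson_pow hx₀ 4).sub
      ((tendsto_poisson_pow hx₀ 3).const_mul (2 * x₀))).add
      ((tendsto_poisson_pow hx₀ 2).const_mul (x₀ ^ 2))).const_mul M).const_add (ε / 2)
    have hz : ε / 2 + M * (x₀ ^ 4 - 2 * x₀ * x₀ ^ 3 + x₀ ^ 2 * x₀ ^ 2) = ε / 2 := by ring
    rw [hz] at hlim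
    filter_upwards [eventually_gt_atTop 4, hlim.eventually_lt_const (half_lt_self hε)]
      with s hs hlt
    refine lt_of_le_of_lt ?_ hlt
    push_cast
    set l := u * (s - 1) with hl
    have hl0 : 0 ≤ l := mul_nonneg hu0 (by linarith)
    have h1 := hasSum_poisson_logMoment hf hC (by linarith : 2 < s) hc hcf u
    have p1 := hasSum_poisson_pow l 1
    simp only [one_pow, mul_one, sub_self, mul_zero, Real.exp_zero] at p1
    have hsub := h1.sub (p1.mul_right (f x₀))
    have hbd := (p1.mul_right (ε / 2)).add
      ((((hasSum_poisson_pow l (s / (s - 4))).sub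
        ((hasSum_poisson_pow l (s / (s - 3))).mul_left (2 * x₀))).add
        ((hasSum_poisson_pow l (s / (s - 2))).mul_left (x₀ ^ 2))).mul_left M)
    rw [one_mul] at hsub hbd
    rw [dist_eq_norm, ← hsub.tsum_eq, ← hbd.tsum_eq]
    refine tsum_of_norm_bounded hbd.summable.hasSum fun m => ?_
    have hw : 0 ≤ l ^ m / (Nat.factorial m) * Real.exp (-l) := by positivity
    have hm := mul_le_mul_of_nonneg_left (abs_logMoment_sub_le hf hC hM hs m) hw
    set w := l ^ m / (Nat.factorial m) * Real.exp (-l)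
    rw [← mul_sub, norm_mul, Real.norm_of_nonneg hw]
    refine hm.trans (le_of_eq ?_)
    ring
  have hs : Tendsto (fun ρ : ℝ => (1 - ρ)⁻¹) (𝓝[<] 1) atTop := by
    refine tendsto_inv_nhdsGT_zero.comp (tendsto_nhdsWithin_iff.2 ⟨?_, ?_⟩)
    · have : Continuous fun ρ : ℝ => 1 - ρ := by fun_prop
      simpa using (this.tendsto 1).mono_left nhdsWithin_le_nhds
    · filter_upwards [self_mem_nhdsWithin] with ρ hρ
      exact Set.mem_Ioi.2 (sub_pos.2 (Set.mem_Iio.1 hρ))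
  refine (main.comp hs).congr fun ρ => ?_
  simp

end AbelLimit

section Taylor

lemma differentiable_zetaPowAux (k : ℕ) : Differentiable ℂ (zetaPowAux k) := by
  have hne (s : ℂ) (hs : s ≠ 1) : DifferentiableAt ℂ (zetaPowAux k) s := by
    have h : DifferentiableAt ℂ (fun s : ℂ => ((s - 1) * riemannZeta s) ^ k) s :=
      ((differentiableAt_id.sub_const 1).mul (differentiableAt_riemannZeta hs)).pow k
    refine h.congr_of_eventuallyEq ?_
    filter_upwards [isOpen_ne.mem_nhds hs] with z hz
    exact Function.update_of_ne hz _ _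
  intro s
  rcases ne_or_eq s 1 with hs | rfl
  · exact hne s hs
  · refine (analyticAt_of_differentiable_on_punctured_nhds_of_continuousAt ?_ ?_).differentiableAt
    · filter_upwards [self_mem_nhdsWithin] with z hz
      exact hne z hz
    · rw [zetaPowAux, continuousAt_update_same]
      simpa using riemannZeta_residue_one.pow k

lemma hasSum_lam (k : ℕ) (w : ℝ) :
    HasSum (fun j => lam k j / (Nat.factorial j) * w ^ j) (zetaPowAux k (1 + w)).re := by
  have h := hasSum_re (hasSum_taylorSeries_of_entire (differentiable_zetaPowAux k) 1 (1 + w))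
  convert! h using 2 with j
  have e : ((Nat.factorial j : ℂ)⁻¹ • (1 + (w : ℂ) - 1) ^ j • iteratedDeriv j (zetaPowAux k) 1) =
      (((Nat.factorial j : ℝ)⁻¹ * w ^ j : ℝ) : ℂ) * iteratedDeriv j (zetaPowAux k) 1 := by
    push_cast
    rw [add_sub_cancel_left, smul_eq_mul, smul_eq_mul]
    ring
  rw [e, re_ofReal_mul, lam]
  ring

lemma summable_abs_lam (k : ℕ) (R : ℝ) :
    Summable fun j => |lam k j / (Nat.factorial j)| * |R| ^ j := by
  refine (hasSum_lam k R).summable.abs.congr fun j => ?_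
  rw [abs_mul, abs_pow]

end Taylor

section Coefficients

lemma neg_one_pow_mul_ell_zero (k : ℕ) :
    (-1 : ℝ) ^ 0 * ell k ((0 : ℕ) : ℤ) =
      (-1 : ℝ) ^ k * ∑ i ∈ Finset.range (k + 1), (-1 : ℝ) ^ i * lam k i / (Nat.factorial i) := by
  simp [ell]

lemma neg_one_pow_mul_ell_succ (k n : ℕ) :
    (-1 : ℝ) ^ (n + 1) * ell k ((n + 1 : ℕ) : ℤ) =
      binomialTransform (fun i => lam k (i + 1 + k) / (Nat.factorial (i + 1 + k))) n := by
  have h1 : (1 : ℤ) ≤ ((n + 1 : ℕ) : ℤ) := by push_cast; linarith [n.cast_nonneg (α := ℤ)]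
  have h2 : (-1 : ℝ) ^ (n + 1) * (-1) ^ (n + 1) = 1 := by rw [← mul_pow]; simp
  rw [ell, if_pos h1, Int.toNat_natCast, ← mul_assoc, h2, one_mul, binomialTransform,
    Finset.sum_bij (fun j _ => j - 1)]
  · intro j hj
    rw [Finset.mem_Icc] at hj
    exact Finset.mem_range.2 (by omega)
  · intro a ha b hb h
    rw [Finset.mem_Icc] at ha hb
    omega
  · intro b hb
    rw [Finset.mem_range] at hb
    exact ⟨b + 1, Finset.mem_Icc.2 (by omega), rfl⟩
  · intro j hj
    rw [Finset.mem_Icc] at hj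
    rw [Nat.sub_add_cancel hj.1, Nat.add_sub_cancel, mul_div_assoc]

lemma summable_abs_lam_shift (k : ℕ) {R : ℝ} (hR : 0 ≤ R) :
    Summable fun i => |lam k (i + 1 + k) / (Nat.factorial (i + 1 + k))| * R ^ i := by
  have h := (summable_nat_add_iff (1 + k)).2 (summable_abs_lam k (R + 1))
  refine Summable.of_nonneg_of_le (fun i => by positivity) (fun i => ?_) h
  rw [← add_assoc, abs_of_nonneg (by linarith : 0 ≤ R + 1)]
  refine mul_le_mul_of_nonneg_left ?_ (abs_nonneg _)
  calc R ^ i ≤ (R + 1) ^ i := pow_le_pow_left₀ hR (by linarith) i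
    _ ≤ _ := pow_le_pow_right₀ (by linarith) (by omega)

lemma summable_abs_ell (k : ℕ) (r : ℝ) (hr0 : 0 ≤ r) (hr : r < 1) :
    Summable fun n : ℕ => |(-1 : ℝ) ^ n * ell k n| * r ^ n := by
  rw [← summable_nat_add_iff 1]
  have h := summable_geometric_mul_binomialTransform hr0 hr
    (summable_abs_lam_shift k (div_nonneg hr0 (by linarith : 0 ≤ 1 - r)))
  refine Summable.of_nonneg_of_le (fun n => by positivity) (fun n => ?_) (h.mul_left r)
  rw [neg_one_pow_mul_ell_succ, pow_succ]
  calc _ ≤ _ := mul_le_mul_of_nonneg_right (abs_binomialTransform_le _ n) (by positivity)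
    _ = _ := by ring

lemma tsum_ell (k : ℕ) {t : ℝ} (ht : 1 < t) :
    (t - 1) ^ k * ∑' n : ℕ, (-1 : ℝ) ^ n * ell k n * (1 - 1 / t) ^ n =
      (zetaPowAux k t).re - ∑ j ∈ Finset.range (k + 1), lam k j / (Nat.factorial j) * (t - 1) ^ j +
      (t - 1) ^ k * ((-1 : ℝ) ^ k *
        ∑ i ∈ Finset.range (k + 1), (-1 : ℝ) ^ i * lam k i / (Nat.factorial i)) := by
  have ht0 : 0 < t := by linarith
  set z := 1 - 1 / t with hz
  have hz1 : 1 - z = 1 / t := by rw [hz]; ring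
  have hz0 : 0 ≤ z := by
    rw [hz, sub_nonneg, div_le_one ht0]
    exact ht.le
  have hzlt : z < 1 := by
    have : 0 < 1 / t := by positivity
    linarith
  have hzabs : |z| = z := abs_of_nonneg hz0
  have hsum : Summable fun n : ℕ => (-1 : ℝ) ^ n * ell k n * z ^ n := by
    refine Summable.of_norm ((summable_abs_ell k z hz0 hzlt).congr fun n => ?_)
    rw [norm_mul, Real.norm_of_nonneg (pow_nonneg hz0 n), Real.norm_eq_abs]
  have hgeo := hasSum_geometric_mul_binomialTransform (t := z)
    (β := fun i => lam k (i + 1 + k) / (Nat.factorial (i + 1 + k))) (by rwa [hzabs])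
    (summable_abs_lam_shift k (by rw [hzabs]; exact div_nonneg hz0 (by linarith)))
  have htail := hasSum_lam k (t - 1)
  rw [← hasSum_nat_add_iff' (k + 1)] at htail
  have e1 : (1 + ((t - 1 : ℝ) : ℂ)) = t := by push_cast; ring
  rw [e1] at htail
  have key : (t - 1) ^ k * (z * ∑' n, z ^ n *
      binomialTransform (fun i => lam k (i + 1 + k) / (Nat.factorial (i + 1 + k))) n) =
      (zetaPowAux k t).re -
        ∑ j ∈ Finset.range (k + 1), lam k j / (Nat.factorial j) * (t - 1) ^ j := by
    rw [← htail.tsum_eq, ← hgeo.tsum_eq, ← tsum_mul_left, ← tsum_mul_left]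
    refine tsum_congr fun i => ?_
    have e2 : z = (t - 1) * (1 / t) := by rw [hz]; field_simp
    have e3 : i + (k + 1) = i + 1 + k := by ring
    rw [hz1, e2, e3, mul_pow, pow_add (t - 1) (i + 1) k, pow_succ (t - 1) i,
      pow_succ (1 / t) i]
    field_simp
  rw [hsum.tsum_eq_zero_add, neg_one_pow_mul_ell_zero, pow_zero, mul_one, mul_add, ← key, add_comm]
  congr 2
  rw [← tsum_mul_left]
  refine tsum_congr fun n => ?_
  rw [neg_one_pow_mul_ell_succ, pow_succ]
  ring

lemma sum_pow_sub_alternating (μ : ℕ → ℝ) (w : ℝ) (k : ℕ) :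
    ∑ j ∈ Finset.range (k + 1), μ j * w ^ j -
        w ^ k * ((-1 : ℝ) ^ k * ∑ i ∈ Finset.range (k + 1), (-1 : ℝ) ^ i * μ i) =
      (1 + w) * ∑ m ∈ Finset.range k,
        ((-1 : ℝ) ^ m * ∑ i ∈ Finset.range (m + 1), (-1 : ℝ) ^ i * μ i) * w ^ m := by
  induction k with
  | zero => simp
  | succ k ih =>
    have h2 : (-1 : ℝ) ^ (k + 1) * (-1) ^ (k + 1) = 1 := by rw [← mul_pow]; simp
    rw [Finset.sum_range_succ (fun j => μ j * w ^ j) (k + 1),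
      Finset.sum_range_succ (fun i => (-1 : ℝ) ^ i * μ i) (k + 1),
      Finset.sum_range_succ (fun m => ((-1 : ℝ) ^ m *
        ∑ i ∈ Finset.range (m + 1), (-1 : ℝ) ^ i * μ i) * w ^ m) k, mul_add (1 + w), ← ih]
    linear_combination (-w ^ (k + 1) * μ (k + 1)) * h2

lemma mul_sum_aCoef (k : ℕ) {w : ℝ} (hw : 0 < w) :
    w ^ k * ∑ j ∈ Finset.range k, aCoef k j / w ^ (j + 1) =
      ∑ m ∈ Finset.range k, ((-1 : ℝ) ^ m *
        ∑ i ∈ Finset.range (m + 1), (-1 : ℝ) ^ i * (lam k i / (Nat.factorial i))) * w ^ m := by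
  rw [← Finset.sum_range_reflect, Finset.mul_sum]
  refine Finset.sum_congr rfl fun m hm => ?_
  rw [Finset.mem_range] at hm
  have e1 : k - 1 - (k - 1 - m) = m := by omega
  have e2 : w ^ k = w ^ m * w ^ (k - 1 - m + 1) := by
    rw [← pow_add]
    congr 1
    omega
  rw [aCoef, e1, e2]
  simp_rw [mul_div_assoc]
  field_simp

end Coefficients

section Divisor

lemma LSeriesHasSum_dk (k : ℕ) {s : ℂ} (hs : 1 < s.re) :
    LSeriesHasSum (fun n => (dk k n : ℂ)) s (riemannZeta s ^ k) := by
  induction k with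
  | zero =>
    have h : (fun n => (dk 0 n : ℂ)) = LSeries.delta := by
      funext n
      simp [dk, ArithmeticFunction.one_apply, LSeries.delta]
    rw [h, pow_zero, LSeriesHasSum, funext (LSeries.term_delta s)]
    exact hasSum_ite_eq 1 1
  | succ k ih =>
    have h := ArithmeticFunction.LSeriesHasSum_mul
      (f := ((ArithmeticFunction.zeta ^ k : ArithmeticFunction ℕ) : ArithmeticFunction ℂ))
      (g := (ArithmeticFunction.zeta : ArithmeticFunction ℂ)) (s := s)
      (by simpa only [ArithmeticFunction.natCoe_apply, dk] using ih)
      (by simpa only [ArithmeticFunction.natCoe_apply] using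
        ArithmeticFunction.LSeriesHasSum_zeta hs)
    rw [← ArithmeticFunction.natCoe_mul, ← pow_succ, ← pow_succ] at h
    simpa only [ArithmeticFunction.natCoe_apply, dk] using h

lemma exists_sum_dk_le (k : ℕ) :
    ∃ C : ℝ, 0 ≤ C ∧ ∀ x : ℝ, 0 ≤ x → ∑ n ∈ Finset.Icc 1 ⌊x⌋₊, (dk k n : ℝ) ≤ C * x ^ 2 := by
  have h := (LSeriesHasSum_dk k (s := 2) (by norm_num)).LSeriesSummable.norm
  refine ⟨∑' n, ‖LSeries.term (fun n => (dk k n : ℂ)) 2 n‖, tsum_nonneg fun n => norm_nonneg _,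
    fun x hx => ?_⟩
  calc ∑ n ∈ Finset.Icc 1 ⌊x⌋₊, (dk k n : ℝ)
      ≤ ∑ n ∈ Finset.Icc 1 ⌊x⌋₊, ‖LSeries.term (fun n => (dk k n : ℂ)) 2 n‖ * x ^ 2 := by
        refine Finset.sum_le_sum fun n hn => ?_
        rw [Finset.mem_Icc] at hn
        have hn0 : (0 : ℝ) < n := by exact_mod_cast hn.1
        have hnx : (n : ℝ) ≤ x := (Nat.le_floor_iff hx).1 hn.2
        rw [LSeries.norm_term_eq, if_neg (by omega), Complex.norm_natCast]
        simp only [re_ofNat, Real.rpow_ofNat]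
        rw [div_mul_eq_mul_div, le_div_iff₀ (by positivity)]
        gcongr
    _ = (∑ n ∈ Finset.Icc 1 ⌊x⌋₊, ‖LSeries.term (fun n => (dk k n : ℂ)) 2 n‖) * x ^ 2 := by
        rw [Finset.sum_mul]
    _ ≤ _ := by
        gcongr
        exact h.sum_le_tsum _ fun n _ => norm_nonneg _

lemma measurable_sum_dk (k : ℕ) :
    Measurable fun x : ℝ => ∑ n ∈ Finset.Icc 1 ⌊x⌋₊, (dk k n : ℝ) :=
  (measurable_from_nat (f := fun N : ℕ => ∑ n ∈ Finset.Icc 1 N, (dk k n : ℝ))).comp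
    Nat.measurable_floor

lemma sum_dk_nonneg (k N : ℕ) : (0 : ℝ) ≤ ∑ n ∈ Finset.Icc 1 N, (dk k n : ℝ) :=
  Finset.sum_nonneg fun _ _ => Nat.cast_nonneg _

lemma zeta_pow_re_eq_mul_integral (k : ℕ) {t : ℝ} (ht : 2 < t) :
    (riemannZeta t ^ k).re =
      t * ∫ x in Set.Ioi (1 : ℝ), (∑ n ∈ Finset.Icc 1 ⌊x⌋₊, (dk k n : ℝ)) * x ^ (-t - 1) := by
  obtain ⟨C, -, hC⟩ := exists_sum_dk_le k
  have h := LSeries_eq_mul_integral_of_nonneg (fun n => (dk k n : ℝ)) (r := 2) (s := (t : ℂ))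
    (by norm_num) (by simpa using ht) ?_ (fun n => Nat.cast_nonneg _)
  · have h1 := (LSeriesHasSum_dk k (s := (t : ℂ)) (by rw [ofReal_re]; linarith)).LSeries_eq
    simp only [ofReal_natCast] at h
    rw [h1] at h
    have e : (∫ x in Set.Ioi (1 : ℝ), (∑ n ∈ Finset.Icc 1 ⌊x⌋₊, (dk k n : ℂ)) *
        (x : ℂ) ^ (-((t : ℂ) + 1))) = ((∫ x in Set.Ioi (1 : ℝ),
          (∑ n ∈ Finset.Icc 1 ⌊x⌋₊, (dk k n : ℝ)) * x ^ (-t - 1) : ℝ) : ℂ) := by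
      rw [← integral_complex_ofReal]
      refine setIntegral_congr_fun measurableSet_Ioi fun x hx => ?_
      have hx0 : (0 : ℝ) ≤ x := (one_pos.trans (Set.mem_Ioi.1 hx)).le
      push_cast [Complex.ofReal_cpow hx0]
      congr 2
      ring
    rw [h, e, ← ofReal_mul, ofReal_re]
  · refine IsBigO.of_bound C (Eventually.of_forall fun N => ?_)
    have := hC N N.cast_nonneg
    rw [Nat.floor_natCast] at this
    rw [Real.norm_of_nonneg (sum_dk_nonneg k N), Real.rpow_ofNat,
      Real.norm_of_nonneg (by positivity)]
    exact this

end Divisor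

section ErrorTerm

lemma measurable_Deltak (k : ℕ) : Measurable (Deltak k) := by
  refine (measurable_sum_dk k).sub (measurable_id.mul ?_)
  exact Finset.measurable_fun_sum _ fun j _ => (Real.measurable_log.pow_const j).const_mul _

lemma exists_abs_Deltak_le (k : ℕ) : ∃ C : ℝ, ∀ x, 1 ≤ x → |Deltak k x| ≤ C * x ^ 2 := by
  obtain ⟨C, -, hC⟩ := exists_sum_dk_le k
  refine ⟨C + ∑ j ∈ Finset.range k, |aCoef k j|, fun x hx => ?_⟩
  have hx0 : 0 < x := by linarith
  have h1 : |∑ j ∈ Finset.range k, aCoef k j / (Nat.factorial j) * (Real.log x) ^ j| ≤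
      (∑ j ∈ Finset.range k, |aCoef k j|) * x := by
    rw [Finset.sum_mul]
    refine (Finset.abs_sum_le_sum_abs _ _).trans (Finset.sum_le_sum fun j _ => ?_)
    have hl := Real.log_nonneg hx
    have := Real.pow_div_factorial_le_exp _ hl j
    rw [Real.exp_log hx0] at this
    rw [abs_mul, abs_div, Nat.abs_cast, abs_of_nonneg (pow_nonneg hl j)]
    calc _ = |aCoef k j| * ((Real.log x) ^ j / (Nat.factorial j)) := by ring
      _ ≤ _ := by gcongr
  refine (abs_sub _ _).trans ?_
  rw [abs_of_nonneg (sum_dk_nonneg k _), abs_mul, abs_of_pos hx0, add_mul]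
  refine add_le_add (hC x hx0.le) ?_
  calc _ ≤ x * ((∑ j ∈ Finset.range k, |aCoef k j|) * x) := by gcongr
    _ = _ := by ring

lemma continuousAt_Deltak (k : ℕ) {x : ℝ} (hx : 1 ≤ x) (hxn : x ∉ Set.range ((↑) : ℕ → ℝ)) :
    ContinuousAt (Deltak k) x := by
  have hx0 : 0 < x := by linarith
  have hfl : ∀ᶠ y in 𝓝 x, ⌊y⌋₊ = ⌊x⌋₊ := by
    have h1 : (⌊x⌋₊ : ℝ) < x :=
      lt_of_le_of_ne (Nat.floor_le hx0.le) fun h => hxn ⟨_, h⟩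
    filter_upwards [Ioo_mem_nhds h1 (Nat.lt_floor_add_one x)] with y hy
    exact (Nat.floor_eq_iff ((Nat.cast_nonneg _).trans hy.1.le)).2 ⟨hy.1.le, hy.2⟩
  have h : ContinuousAt (fun y : ℝ => (∑ n ∈ Finset.Icc 1 ⌊x⌋₊, (dk k n : ℝ)) -
      y * ∑ j ∈ Finset.range k, aCoef k j / (Nat.factorial j) * (Real.log y) ^ j) x := by
    have := Real.continuousAt_log hx0.ne'
    fun_prop
  refine h.congr ?_
  filter_upwards [hfl] with y hy
  rw [Deltak, hy]

lemma mul_integral_Deltak (k : ℕ) {t : ℝ} (ht : 2 < t) :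
    t * ∫ x in Set.Ioi (1 : ℝ), Deltak k x * x ^ (-t - 1) =
      (riemannZeta t ^ k).re - t * ∑ j ∈ Finset.range k, aCoef k j / (t - 1) ^ (j + 1) := by
  obtain ⟨C, -, hC⟩ := exists_sum_dk_le k
  have h1 : IntegrableOn (fun x : ℝ => (∑ n ∈ Finset.Icc 1 ⌊x⌋₊, (dk k n : ℝ)) * x ^ (-t - 1))
      (Set.Ioi 1) := by
    have := integrableOn_mul_log_pow (measurable_sum_dk k) (C := C) (fun x hx => by
      rw [abs_of_nonneg (sum_dk_nonneg k _)]
      exact hC x (by linarith)) ht 0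
    simpa only [pow_zero, one_mul] using this
  have hpow (j : ℕ) := integrableOn_pow_mul (s := t) 1 j (by push_cast; linarith)
  have hint (j : ℕ) := integral_pow_mul (s := t) 1 j (by push_cast; linarith)
  push_cast at hint
  have h2 (j : ℕ) : IntegrableOn (fun x : ℝ => aCoef k j / (Nat.factorial j) *
      (x ^ 1 * ((Real.log x) ^ j * x ^ (-t - 1)))) (Set.Ioi 1) := (hpow j).const_mul _
  have e : (∫ x in Set.Ioi (1 : ℝ), Deltak k x * x ^ (-t - 1)) =
      ∫ x in Set.Ioi (1 : ℝ), ((∑ n ∈ Finset.Icc 1 ⌊x⌋₊, (dk k n : ℝ)) * x ^ (-t - 1) -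
        ∑ j ∈ Finset.range k, aCoef k j / (Nat.factorial j) *
          (x ^ 1 * ((Real.log x) ^ j * x ^ (-t - 1)))) := by
    congr 1
    funext x
    rw [Deltak, sub_mul]
    congr 1
    rw [Finset.mul_sum, Finset.sum_mul]
    exact Finset.sum_congr rfl fun j _ => by ring
  rw [e, integral_sub h1 (integrable_finsetSum _ fun j _ => h2 j),
    integral_finsetSum _ fun j _ => h2 j, mul_sub, ← zeta_pow_re_eq_mul_integral k ht]
  congr 2
  refine Finset.sum_congr rfl fun j _ => ?_
  have := Nat.factorial_pos j
  rw [integral_const_mul, hint]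
  field_simp

/-- The generating function of the coefficients is the Mellin transform of the error term. -/
lemma tsum_ell_eq_mul_integral (k : ℕ) {t : ℝ} (ht : 2 < t) :
    ∑' n : ℕ, (-1 : ℝ) ^ n * ell k n * (1 - 1 / t) ^ n =
      t * ∫ x in Set.Ioi (1 : ℝ), Deltak k x * x ^ (-t - 1) := by
  have hw : 0 < t - 1 := by linarith
  have hne : (t : ℂ) ≠ 1 := by exact_mod_cast (by linarith : t ≠ 1)
  have hz : (zetaPowAux k t).re = (t - 1) ^ k * (riemannZeta t ^ k).re := by
    have e : zetaPowAux k t = (((t - 1) ^ k : ℝ) : ℂ) * riemannZeta t ^ k := by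
      rw [zetaPowAux, Function.update_of_ne hne, mul_pow]
      push_cast
      rfl
    rw [e, re_ofReal_mul]
  refine mul_left_cancel₀ (pow_pos hw k).ne' ?_
  rw [tsum_ell k (by linarith), mul_integral_Deltak k ht, hz, mul_sub, mul_left_comm _ t,
    mul_sum_aCoef k hw]
  have h := sum_pow_sub_alternating (fun i => lam k i / (Nat.factorial i)) (t - 1) k
  rw [add_sub_cancel] at h
  rw [← h]
  simp_rw [mul_div_assoc]
  ring

end ErrorTerm

theorem stmt4 (k : ℕ) (hk : 0 < k) :
    (∀ ρ ∈ Set.Ico (0 : ℝ) 1, ∀ x : ℝ, 1 ≤ x →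
      Summable fun n : ℕ => |(-1 : ℝ) ^ n * ell k n * laguerre n (Real.log x) * ρ ^ n|) ∧
    ∀ᵐ x ∂(volume.restrict (Set.Ici (1 : ℝ))),
      Tendsto (fun ρ : ℝ => ∑' n : ℕ, (-1 : ℝ) ^ n * ell k n * laguerre n (Real.log x) * ρ ^ n)
        (𝓝[<] 1) (𝓝 (Deltak k x)) := by
  refine ⟨fun ρ hρ x _ => ?_, ?_⟩
  · refine Summable.of_nonneg_of_le (fun n => abs_nonneg _) (fun n => ?_)
      (summable_abs_mul_pow_mul_laguerre (summable_abs_ell k) (Real.log x) hρ.1 hρ.2)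
    rw [mul_right_comm, abs_mul, ← binomialTransform_laguerre]
    exact mul_le_mul_of_nonneg_left (abs_binomialTransform_le _ n) (abs_nonneg _)
  · obtain ⟨C, hC⟩ := exists_abs_Deltak_le k
    have hnull : ∀ᵐ x : ℝ ∂(volume.restrict (Set.Ici (1 : ℝ))),
        x ∉ Set.range ((↑) : ℕ → ℝ) :=
      ae_restrict_of_ae ((Set.countable_range _).ae_notMem volume)
    filter_upwards [hnull, ae_restrict_mem measurableSet_Ici] with x hxn hx
    exact tendsto_laguerre_abel (measurable_Deltak k) hC (summable_abs_ell k)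
      (fun t ht => tsum_ell_eq_mul_integral k ht) hx (continuousAt_Deltak k hx hxn)
end

section
/- The Lindelöf Hypothesis holds if and only if, for every positive integer k, the limit lim_{ρ→1⁻} Σ_{n=0}^∞ ℓ_{n,k}² ρ^{2n} exists and is finite (i.e. the sequence (ℓ_{n,k}²)_{n ≥ 0} is Abel summable). -/
open scoped Real Topology
open Complex Filter MeasureTheory Finset Asymptotics

theorem zetaPowAux_eq (k : ℕ) : zetaPowAux k = fun s => riemannZeta₁ s ^ k := by
  funext s
  by_cases hs : s = 1
  · subst hs; simp [zetaPowAux]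
  · have h : s - 1 ≠ 0 := sub_ne_zero.mpr hs
    simp [zetaPowAux, hs, riemannZeta_eq_inv_sub_mul hs, h]

/-- The fractional part on `(1, ∞)`, extended by zero. -/
noncomputable def fractTail : ℝ → ℂ :=
  Set.indicator (Set.Ioi 1) fun t => ((Int.fract t : ℝ) : ℂ)

theorem norm_fractTail_le (t : ℝ) : ‖fractTail t‖ ≤ 1 := by
  unfold fractTail
  by_cases h : t ∈ Set.Ioi (1 : ℝ)
  · rw [Set.indicator_of_mem h, norm_real, Real.norm_of_nonneg (Int.fract_nonneg t)]
    exact (Int.fract_lt_one t).le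
  · rw [Set.indicator_of_notMem h]; simp

theorem measurable_fractTail : Measurable fractTail :=
  (Complex.measurable_ofReal.comp measurable_fract).indicator measurableSet_Ioi

theorem mellin_fractTail (s : ℂ) :
    mellin fractTail (-s) =
      ∫ t in Set.Ioi (1 : ℝ), (t : ℂ) ^ (-s - 1) * ((Int.fract t : ℝ) : ℂ) := by
  have h : (fun t : ℝ => (t : ℂ) ^ (-s - 1) • fractTail t) =
      Set.indicator (Set.Ioi 1) fun t : ℝ =>
        (t : ℂ) ^ (-s - 1) * ((Int.fract t : ℝ) : ℂ) := by
    funext t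
    by_cases ht : t ∈ Set.Ioi (1 : ℝ)
    · simp only [fractTail, Set.indicator_of_mem ht, smul_eq_mul]
    · simp only [fractTail, Set.indicator_of_notMem ht, smul_zero]
  rw [mellin, h, setIntegral_indicator measurableSet_Ioi]
  congr 2
  exact Set.inter_eq_right.mpr (Set.Ioi_subset_Ioi zero_le_one)

theorem norm_mellin_fractTail_le {s : ℂ} (hs : 0 < s.re) :
    ‖mellin fractTail (-s)‖ ≤ 1 / s.re := by
  rw [mellin_fractTail]
  have hint : IntegrableOn (fun t : ℝ => t ^ (-s.re - 1)) (Set.Ioi 1) :=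
    integrableOn_Ioi_rpow_of_lt (by linarith) zero_lt_one
  have hval : ∫ t in Set.Ioi (1 : ℝ), t ^ (-s.re - 1) = 1 / s.re := by
    rw [integral_Ioi_rpow_of_lt (by linarith) zero_lt_one]
    simp
  rw [← hval]
  refine norm_integral_le_of_norm_le hint ?_
  refine (ae_restrict_iff' measurableSet_Ioi).mpr (ae_of_all _ fun t ht => ?_)
  have ht0 : (0 : ℝ) < t := zero_lt_one.trans ht
  rw [norm_mul, norm_cpow_eq_rpow_re_of_pos ht0, norm_real,
    Real.norm_of_nonneg (Int.fract_nonneg t)]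
  simp only [sub_re, neg_re, one_re]
  exact mul_le_of_le_one_right (Real.rpow_nonneg ht0.le _) (Int.fract_lt_one t).le

theorem differentiableAt_mellin_fractTail {s : ℂ} (hs : 0 < s.re) :
    DifferentiableAt ℂ (fun s => mellin fractTail (-s)) s := by
  have hloc : LocallyIntegrableOn fractTail (Set.Ioi 0) := by
    refine (LocallyIntegrable.mono (locallyIntegrable_const (1 : ℂ))
      measurable_fractTail.aestronglyMeasurable (ae_of_all _ fun t => ?_)).locallyIntegrableOn _
    simpa using norm_fractTail_le t
  have htop : fractTail =O[atTop] (fun t : ℝ => t ^ (-(0 : ℝ))) := by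
    refine isBigO_of_le _ fun t => ?_
    simpa using norm_fractTail_le t
  have hbot : fractTail =O[𝓝[>] 0] (fun t : ℝ => t ^ (-(-s.re - 1))) := by
    refine EventuallyEq.trans_isBigO (f₂ := fun _ => (0 : ℂ)) ?_ (isBigO_zero _ _)
    have : Set.Iio (1 : ℝ) ∈ 𝓝[>] (0 : ℝ) :=
      mem_nhdsWithin_of_mem_nhds (Iio_mem_nhds zero_lt_one)
    filter_upwards [this] with t ht
    have : t ∉ Set.Ioi (1 : ℝ) := by simpa using (show t < 1 from ht).le
    exact Set.indicator_of_notMem this _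
  have h := mellin_differentiableAt_of_isBigO_rpow (s := -s) hloc htop (by simpa using hs) hbot
    (by simp)
  exact h.comp s differentiableAt_id.neg

theorem riemannZeta₁_eq_of_one_lt_re {s : ℂ} (hs : 1 < s.re) :
    riemannZeta₁ s = s - s * (s - 1) * mellin fractTail (-s) := by
  have hs1 : s ≠ 1 := fun h => by simp [h] at hs
  have hsub : s - 1 ≠ 0 := sub_ne_zero.mpr hs1
  have hL : LSeries (fun n => ((1 : ℝ) : ℂ)) s =
      s * ∫ t in Set.Ioi (1 : ℝ), (∑ k ∈ Icc 1 ⌊t⌋₊, ((1 : ℝ) : ℂ)) * (t : ℂ) ^ (-(s + 1)) := by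
    refine LSeries_eq_mul_integral_of_nonneg (fun _ => 1) zero_le_one hs ?_ (by simp)
    simpa using isBigO_refl _ _
  have hz : LSeries (fun n => ((1 : ℝ) : ℂ)) s = riemannZeta s := by
    rw [← LSeries_one_eq_riemannZeta hs, ofReal_one]
    rfl
  have hint₁ : IntegrableOn (fun t : ℝ => (t : ℂ) ^ (-s)) (Set.Ioi 1) :=
    integrableOn_Ioi_cpow_of_lt (by simpa using hs) zero_lt_one
  have hint₂ : IntegrableOn
      (fun t : ℝ => (t : ℂ) ^ (-s - 1) * ((Int.fract t : ℝ) : ℂ)) (Set.Ioi 1) := by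
    have h0 : IntegrableOn (fun t : ℝ => (t : ℂ) ^ (-s - 1)) (Set.Ioi 1) :=
      integrableOn_Ioi_cpow_of_lt (by simp; linarith) zero_lt_one
    refine Integrable.mono h0 (h0.aestronglyMeasurable.mul
      (Complex.measurable_ofReal.comp measurable_fract).aestronglyMeasurable)
      (ae_of_all _ fun t => ?_)
    rw [norm_mul, norm_real, Real.norm_of_nonneg (Int.fract_nonneg t)]
    exact mul_le_of_le_one_right (norm_nonneg _) (Int.fract_lt_one t).le
  have hsplit : ∫ t in Set.Ioi (1 : ℝ),
      (∑ k ∈ Icc 1 ⌊t⌋₊, ((1 : ℝ) : ℂ)) * (t : ℂ) ^ (-(s + 1)) =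
      (∫ t in Set.Ioi (1 : ℝ), (t : ℂ) ^ (-s)) - mellin fractTail (-s) := by
    rw [mellin_fractTail, ← integral_sub hint₁ hint₂]
    refine setIntegral_congr_fun measurableSet_Ioi fun t ht => ?_
    have ht0 : (0 : ℝ) < t := zero_lt_one.trans ht
    have htc : (t : ℂ) ≠ 0 := ofReal_ne_zero.mpr ht0.ne'
    have hfl : ((⌊t⌋₊ : ℝ) : ℂ) = (t : ℂ) - ((Int.fract t : ℝ) : ℂ) := by
      rw [← ofReal_sub]
      congr 1
      rw [natCast_floor_eq_intCast_floor ht0.le, ← Int.self_sub_floor]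
      ring
    have hpow : (t : ℂ) ^ (-s) = t * (t : ℂ) ^ (-s - 1) := by
      rw [cpow_sub _ _ htc, cpow_one]
      field_simp
    have hexp : -(s + 1) = -s - 1 := by ring
    simp only [ofReal_one, sum_const, Nat.card_Icc, add_tsub_cancel_right, nsmul_eq_mul, mul_one]
    rw [hpow, hexp, ← ofReal_natCast, hfl]
    ring
  have hI : ∫ t in Set.Ioi (1 : ℝ), (t : ℂ) ^ (-s) = 1 / (s - 1) := by
    rw [integral_Ioi_cpow_of_lt (by simpa using hs) zero_lt_one]
    have : -s + 1 ≠ 0 := by rw [neg_add_eq_sub]; exact sub_ne_zero.mpr hs1.symm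
    simp only [ofReal_one, one_cpow]
    field_simp
    ring
  have hzeta : riemannZeta₁ s = (s - 1) * riemannZeta s := by
    rw [riemannZeta_eq_inv_sub_mul hs1]; field_simp
  rw [hzeta, ← hz, hL, hsplit, hI]
  field_simp

theorem riemannZeta₁_eq {s : ℂ} (hs : 0 < s.re) :
    riemannZeta₁ s = s - s * (s - 1) * mellin fractTail (-s) := by
  have hopen : IsOpen {z : ℂ | 0 < z.re} := isOpen_lt continuous_const continuous_re
  have hf : AnalyticOnNhd ℂ riemannZeta₁ {z : ℂ | 0 < z.re} :=
    differentiable_riemannZeta₁.differentiableOn.analyticOnNhd hopen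
  have hg : AnalyticOnNhd ℂ (fun s => s - s * (s - 1) * mellin fractTail (-s))
      {z : ℂ | 0 < z.re} := by
    refine DifferentiableOn.analyticOnNhd (fun z hz => ?_) hopen
    have := differentiableAt_mellin_fractTail hz
    exact DifferentiableAt.differentiableWithinAt (by fun_prop)
  have hconn : IsPreconnected {z : ℂ | 0 < z.re} :=
    (convex_halfSpace_re_gt 0).isPreconnected
  refine hf.eqOn_of_preconnected_of_eventuallyEq hg hconn (z₀ := 2) (by simp) ?_ hs
  have : {z : ℂ | 1 < z.re} ∈ 𝓝 (2 : ℂ) :=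
    (isOpen_lt continuous_const continuous_re).mem_nhds (by simp)
  filter_upwards [this] with z hz using riemannZeta₁_eq_of_one_lt_re hz

theorem norm_riemannZeta₁_le {s : ℂ} (hs : 0 < s.re) :
    ‖riemannZeta₁ s‖ ≤ ‖s‖ + ‖s‖ * ‖s - 1‖ / s.re := by
  rw [riemannZeta₁_eq hs]
  refine (norm_sub_le _ _).trans ?_
  rw [norm_mul, norm_mul, div_eq_mul_one_div]
  gcongr
  exact norm_mellin_fractTail_le hs

theorem riemannZeta₁_conj (s : ℂ) :
    riemannZeta₁ ((starRingEnd ℂ) s) = (starRingEnd ℂ) (riemannZeta₁ s) := by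
  by_cases hs : s = 1
  · subst hs; simp
  · have hs' : (starRingEnd ℂ) s ≠ 1 := fun h => hs (by
      rw [← Complex.conj_conj s, h, map_one])
    have e : ∀ z : ℂ, z ≠ 1 → riemannZeta₁ z = (z - 1) * riemannZeta z := fun z hz => by
      have : z - 1 ≠ 0 := sub_ne_zero.mpr hz
      rw [riemannZeta_eq_inv_sub_mul hz]; field_simp
    rw [e _ hs', e _ hs, riemannZeta_conj]
    simp

theorem conj_iteratedDeriv_of_conj {f : ℂ → ℂ}
    (hf : ∀ s, f ((starRingEnd ℂ) s) = (starRingEnd ℂ) (f s)) (j : ℕ) (s : ℂ) :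
    iteratedDeriv j f ((starRingEnd ℂ) s) = (starRingEnd ℂ) (iteratedDeriv j f s) := by
  induction j generalizing s with
  | zero => simpa using hf s
  | succ j ih =>
    have h : (starRingEnd ℂ) ∘ iteratedDeriv j f ∘ (starRingEnd ℂ) = iteratedDeriv j f := by
      funext z
      simp [ih]
    rw [iteratedDeriv_succ]
    conv_lhs => rw [← h]
    rw [deriv_conj_conj]
    simp

theorem ofReal_lam (k j : ℕ) : (lam k j : ℂ) = iteratedDeriv j (zetaPowAux k) 1 := by
  have h := conj_iteratedDeriv_of_conj (f := zetaPowAux k)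
    (fun s => by simp [zetaPowAux_eq, riemannZeta₁_conj]) j 1
  rw [map_one] at h
  exact conj_eq_iff_re.mp h.symm

/-- The Taylor coefficients of `((s - 1) ζ(s)) ^ k` at `s = 1`. -/
noncomputable def taylorCoeff (k j : ℕ) : ℝ := lam k j / (Nat.factorial j)

theorem hasSum_taylorCoeff (k : ℕ) (u : ℂ) :
    HasSum (fun j => (taylorCoeff k j : ℂ) * u ^ j) (riemannZeta₁ (1 + u) ^ k) := by
  have hd : Differentiable ℂ (zetaPowAux k) := by
    rw [zetaPowAux_eq]; fun_prop
  have h := Complex.hasSum_taylorSeries_of_entire hd 1 (1 + u)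
  rw [zetaPowAux_eq] at h
  simp only [add_sub_cancel_left] at h
  rw [← zetaPowAux_eq] at h
  refine h.congr_fun fun j => ?_
  rw [taylorCoeff, ofReal_div, ofReal_lam]
  simp
  ring

theorem summable_abs_taylorCoeff (k : ℕ) (x : ℝ) :
    Summable fun j => |taylorCoeff k j| * |x| ^ j := by
  have h := (hasSum_taylorCoeff k (x : ℂ)).summable.norm
  simpa using h

theorem hasSum_choose_mul_pow {𝕜 : Type*} [RCLike 𝕜] (i : ℕ) {w : 𝕜} (hw : ‖w‖ < 1) :
    HasSum (fun m : ℕ => (m.choose i : 𝕜) * w ^ m) (w ^ i / (1 - w) ^ (i + 1)) := by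
  have h := (hasSum_choose_mul_geometric_of_norm_lt_one i hw).mul_right (w ^ i)
  have hinj : Function.Injective fun m : ℕ => m + i := add_left_injective i
  refine (hinj.hasSum_iff fun m hm => ?_).mp ?_
  · have : m < i := by
      by_contra hcon
      exact hm ⟨m - i, by simp; omega⟩
    simp [Nat.choose_eq_zero_of_lt this]
  · have e : ((fun m : ℕ => (m.choose i : 𝕜) * w ^ m) ∘ fun m => m + i) =
        fun m => ((m + i).choose i : 𝕜) * w ^ m * w ^ i := by
      funext m; simp [pow_add, mul_assoc]
    rw [e, div_eq_mul_one_div, mul_comm]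
    exact h

theorem ell_natCast_succ (k m : ℕ) :
    ell k ((m + 1 : ℕ) : ℤ) =
      (-1 : ℝ) ^ (m + 1) *
        ∑ i ∈ Finset.range (m + 1), (m.choose i : ℝ) * taylorCoeff k (i + 1 + k) := by
  have h := Finset.sum_Ico_add' (fun j => (m.choose (j - 1) : ℝ) * taylorCoeff k (j + k))
    0 (m + 1) 1
  simp only [add_tsub_cancel_right] at h
  rw [ell, if_pos (by push_cast; omega), Int.toNat_natCast, Finset.range_eq_Ico, h]
  congr 1
  refine Finset.sum_congr (by ext; simp) fun j _ => ?_
  simp [taylorCoeff, mul_div_assoc]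

theorem ell_zero (k : ℕ) :
    ell k 0 = ∑ j ∈ Finset.range (k + 1), (-1 : ℝ) ^ (k - j) * taylorCoeff k j := by
  rw [ell, if_neg (by norm_num), Finset.mul_sum]
  have hk : ((k : ℤ) + 0).toNat = k := by simp
  rw [hk]
  refine Finset.sum_congr rfl fun j hj => ?_
  have hj' : j ≤ k := Nat.lt_succ_iff.mp (Finset.mem_range.mp hj)
  have hsign : (-1 : ℝ) ^ k * (-1) ^ j = (-1) ^ (k - j) := by
    obtain ⟨d, rfl⟩ := Nat.exists_eq_add_of_le hj'
    rw [← pow_add, show j + d + j = d + 2 * j by ring, pow_add, pow_mul]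
    simp
  rw [← hsign, taylorCoeff]
  simp
  ring

theorem summable_binomial_transform {b : ℕ → ℂ}
    (hb : ∀ x : ℝ, 0 ≤ x → Summable fun i => ‖b i‖ * x ^ i) {w : ℂ} (hw : ‖w‖ < 1) :
    Summable fun p : ℕ × ℕ => b p.1 * ((p.2.choose p.1 : ℂ) * w ^ p.2) := by
  refine Summable.of_norm ?_
  have hr : ‖(‖w‖ : ℝ)‖ < 1 := by rwa [norm_norm]
  have hrow : ∀ i, HasSum (fun m : ℕ => ‖b i * ((m.choose i : ℂ) * w ^ m)‖)
      (‖b i‖ * (‖w‖ ^ i / (1 - ‖w‖) ^ (i + 1))) := fun i => by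
    have := (hasSum_choose_mul_pow i hr).mul_left ‖b i‖
    simpa [norm_mul, norm_pow] using this
  refine (summable_prod_of_nonneg fun _ => norm_nonneg _).mpr
    ⟨fun i => (hrow i).summable, ?_⟩
  have hpos : 0 < 1 - ‖w‖ := by linarith
  refine ((hb (‖w‖ / (1 - ‖w‖)) (by positivity)).mul_right (1 / (1 - ‖w‖))).congr fun i => ?_
  rw [(hrow i).tsum_eq, div_pow, pow_succ]
  field_simp

theorem hasSum_binomial_transform {b : ℕ → ℂ}
    (hb : ∀ x : ℝ, 0 ≤ x → Summable fun i => ‖b i‖ * x ^ i) {w S : ℂ} (hw : ‖w‖ < 1)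
    (hS : HasSum (fun i => b i * (w / (1 - w)) ^ i) S) :
    HasSum (fun m : ℕ => (∑ i ∈ Finset.range (m + 1), (m.choose i : ℂ) * b i) * w ^ m)
      (S / (1 - w)) := by
  have hne : 1 - w ≠ 0 := by
    intro h
    have : w = 1 := (sub_eq_zero.mp h).symm
    simp [this] at hw
  have hf := summable_binomial_transform hb hw
  have hrow : ∀ i, HasSum (fun m : ℕ => b i * ((m.choose i : ℂ) * w ^ m))
      (b i * (w ^ i / (1 - w) ^ (i + 1))) := fun i =>
    (hasSum_choose_mul_pow i hw).mul_left (b i)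
  have h1 := hf.hasSum.prod_fiberwise hrow
  have h2 : HasSum (fun i => b i * (w ^ i / (1 - w) ^ (i + 1))) (S / (1 - w)) := by
    refine (hS.div_const (1 - w)).congr_fun fun i => ?_
    rw [div_pow, pow_succ]
    field_simp
  have htot := h1.unique h2
  have h3 := hf.hasSum
  rw [htot] at h3
  have h4 := (Equiv.prodComm ℕ ℕ).hasSum_iff.mpr h3
  refine h4.prod_fiberwise fun m => ?_
  have hfin : (∑ i ∈ Finset.range (m + 1), (m.choose i : ℂ) * b i) * w ^ m =
      ∑ i ∈ Finset.range (m + 1), b i * ((m.choose i : ℂ) * w ^ m) := by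
    rw [Finset.sum_mul]
    exact Finset.sum_congr rfl fun i _ => by ring
  rw [hfin]
  refine hasSum_sum_of_ne_finset_zero fun i hi => ?_
  have hlt : m < i := by simpa using hi
  simp [Nat.choose_eq_zero_of_lt hlt]

/-- The difference between `∑ ℓ_{n,k} z ^ n` (over `n ≥ 0`) and `ζ(1 / (1 + z)) ^ k`, up to sign the
negative-frequency part of the Laurent expansion in `z`. -/
noncomputable def polarCorrection (k : ℕ) (z : ℂ) : ℂ :=
  ∑ j ∈ Finset.range (k + 1),
    (taylorCoeff k j : ℂ) * ((-1) ^ (k - j) * (1 - ((1 + z) / z) ^ (k - j)))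

theorem hasSum_ell (k : ℕ) {z : ℂ} (hz0 : z ≠ 0) (hz : ‖z‖ < 1) :
    HasSum (fun n : ℕ => (ell k n : ℂ) * z ^ n)
      (riemannZeta (1 / (1 + z)) ^ k + polarCorrection k z) := by
  have hne : 1 + z ≠ 0 := by
    intro h
    have : z = -1 := by linear_combination h
    simp [this] at hz
  set u : ℂ := -z / (1 + z) with hu
  have hu0 : u ≠ 0 := div_ne_zero (neg_ne_zero.mpr hz0) hne
  have hu1 : 1 + u = 1 / (1 + z) := by rw [hu]; field_simp; ring
  have hwu : -z / (1 - -z) = u := by rw [sub_neg_eq_add]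
  have hzeta : riemannZeta (1 / (1 + z)) = u⁻¹ * riemannZeta₁ (1 + u) := by
    rw [← hu1, riemannZeta_eq_inv_sub_mul (by simpa using hu0), add_sub_cancel_left]
  have hb : ∀ x : ℝ, 0 ≤ x →
      Summable fun i => ‖((taylorCoeff k (i + 1 + k) : ℝ) : ℂ)‖ * x ^ i := fun x hx => by
    have h1 := (summable_nat_add_iff (1 + k)).mpr (summable_abs_taylorCoeff k (x + 1))
    refine Summable.of_nonneg_of_le (fun i => by positivity) (fun i => ?_) h1
    rw [norm_real, Real.norm_eq_abs, abs_of_nonneg (by linarith : 0 ≤ x + 1), ← add_assoc]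
    gcongr
    calc x ^ i ≤ (x + 1) ^ i := by gcongr; linarith
      _ ≤ (x + 1) ^ (i + 1 + k) := pow_le_pow_right₀ (by linarith) (by omega)
  have hS : HasSum (fun i => ((taylorCoeff k (i + 1 + k) : ℝ) : ℂ) * (-z / (1 - -z)) ^ i)
      ((riemannZeta₁ (1 + u) ^ k - ∑ j ∈ Finset.range (k + 1), (taylorCoeff k j : ℂ) * u ^ j) /
        u ^ (k + 1)) := by
    rw [hwu]
    have h1 := ((hasSum_nat_add_iff' (k + 1)).mpr (hasSum_taylorCoeff k u)).div_const (u ^ (k + 1))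
    refine h1.congr_fun fun i => ?_
    rw [show i + (k + 1) = i + 1 + k by ring, show i + 1 + k = i + (k + 1) by ring, pow_add u]
    field_simp
  have hT := (hasSum_binomial_transform hb (by simpa using hz) hS).mul_left (-z)
  refine (hasSum_nat_add_iff' 1).mp ?_
  have hval : -z * ((riemannZeta₁ (1 + u) ^ k -
        ∑ j ∈ Finset.range (k + 1), (taylorCoeff k j : ℂ) * u ^ j) / u ^ (k + 1) / (1 - -z)) =
      riemannZeta (1 / (1 + z)) ^ k + polarCorrection k z -
        ∑ n ∈ Finset.range 1, (ell k (n : ℕ) : ℂ) * z ^ n := by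
    have h1 : -z * ((riemannZeta₁ (1 + u) ^ k -
        ∑ j ∈ Finset.range (k + 1), (taylorCoeff k j : ℂ) * u ^ j) / u ^ (k + 1) / (1 - -z)) =
        (riemannZeta₁ (1 + u) ^ k -
          ∑ j ∈ Finset.range (k + 1), (taylorCoeff k j : ℂ) * u ^ j) / u ^ k := by
      rw [mul_div_left_comm, hwu, pow_succ]
      field_simp
    have h2 : (∑ j ∈ Finset.range (k + 1), (taylorCoeff k j : ℂ) * u ^ j) / u ^ k =
        ∑ j ∈ Finset.range (k + 1),
          (taylorCoeff k j : ℂ) * ((-1) ^ (k - j) * ((1 + z) / z) ^ (k - j)) := by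
      rw [Finset.sum_div]
      refine Finset.sum_congr rfl fun j hj => ?_
      have hj' : j ≤ k := Nat.lt_succ_iff.mp (Finset.mem_range.mp hj)
      obtain ⟨d, rfl⟩ := Nat.exists_eq_add_of_le hj'
      have hinv : -1 * ((1 + z) / z) = u⁻¹ := by rw [hu]; field_simp
      rw [add_tsub_cancel_left, ← mul_pow, hinv, pow_add, inv_pow]
      field_simp
    rw [h1, sub_div, h2, hzeta, mul_pow, inv_pow]
    simp only [Finset.sum_range_one, Nat.cast_zero, pow_zero, mul_one]
    rw [ell_zero, polarCorrection]
    push_cast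
    simp only [mul_sub, mul_one, Finset.sum_sub_distrib]
    rw [Finset.sum_congr rfl fun j _ => mul_comm ((-1 : ℂ) ^ (k - j)) (taylorCoeff k j : ℂ)]
    ring
  rw [← hval]
  refine hT.congr_fun fun m => ?_
  rw [ell_natCast_succ]
  push_cast
  rw [neg_pow z m]
  ring

theorem exists_norm_polarCorrection_le (k : ℕ) :
    ∃ B : ℝ, 0 ≤ B ∧ ∀ z : ℂ, 1 / 4 ≤ ‖z‖ → ‖z‖ < 1 → ‖polarCorrection k z‖ ≤ B := by
  refine ⟨∑ j ∈ Finset.range (k + 1), |taylorCoeff k j| * (1 + 8 ^ (k - j)),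
    by positivity, fun z hz hz1 => norm_sum_le_of_le _ fun j _ => ?_⟩
  rw [norm_mul, norm_mul, norm_pow, norm_neg, norm_one, one_pow, one_mul, norm_real,
    Real.norm_eq_abs]
  gcongr
  refine (norm_sub_le _ _).trans ?_
  rw [norm_one, norm_pow, norm_div]
  gcongr
  have hpos : 0 < ‖z‖ := by linarith
  rw [div_le_iff₀ hpos]
  have := norm_add_le 1 z
  rw [norm_one] at this
  linarith

theorem summable_ell_mul_pow (k : ℕ) {ρ : ℝ} (h0 : 0 < ρ) (h1 : ρ < 1) :
    Summable fun n : ℕ => |ell k n| * ρ ^ n := by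
  have h := (hasSum_ell k (z := (ρ : ℂ)) (by simpa using h0.ne')
    (by simpa [abs_of_pos h0] using h1)).summable.norm
  simpa [abs_of_pos h0] using h

theorem riemannZeta₁_eq_mul {s : ℂ} (hs : s ≠ 1) :
    riemannZeta₁ s = (s - 1) * riemannZeta s := by
  have : s - 1 ≠ 0 := sub_ne_zero.mpr hs
  rw [riemannZeta_eq_inv_sub_mul hs]
  field_simp

theorem norm_hardy_le_of_summable_sq {k : ℕ} (h : Summable fun n : ℕ => (ell k n) ^ 2)
    {z : ℂ} (hz0 : z ≠ 0) (hz : ‖z‖ < 1) :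
    ‖riemannZeta (1 / (1 + z)) ^ k + polarCorrection k z‖ ≤
      ∑' n : ℕ, (ell k n) ^ 2 + (1 - ‖z‖ ^ 2)⁻¹ := by
  have hsq : ‖z‖ ^ 2 < 1 := pow_lt_one₀ (norm_nonneg _) hz two_ne_zero
  have hgeo := hasSum_geometric_of_lt_one (sq_nonneg ‖z‖) hsq
  have hsum := hasSum_ell k hz0 hz
  rw [← hsum.tsum_eq]
  refine tsum_of_norm_bounded (h.hasSum.add hgeo) fun n => ?_
  rw [norm_mul, norm_pow, norm_real, Real.norm_eq_abs, ← pow_mul, mul_comm 2 n, pow_mul,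
    ← sq_abs (ell k n)]
  nlinarith [sq_nonneg (|ell k n| - ‖z‖ ^ n), sq_nonneg (|ell k n|), sq_nonneg (‖z‖ ^ n)]

theorem norm_riemannZeta₁_le_of_quarter_le {s : ℂ} (hs : 1 / 4 ≤ s.re) :
    ‖riemannZeta₁ s‖ ≤ ‖s‖ + 4 * (‖s‖ * ‖s - 1‖) := by
  refine (norm_riemannZeta₁_le (by linarith)).trans ?_
  gcongr
  rw [div_le_iff₀ (by linarith)]
  nlinarith [mul_nonneg (norm_nonneg s) (norm_nonneg (s - 1))]

theorem norm_deriv_riemannZeta₁_le {s : ℂ} (h1 : 1 / 2 ≤ s.re) (h2 : s.re ≤ 3 / 2)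
    (ht : 1 ≤ |s.im|) : ‖deriv riemannZeta₁ s‖ ≤ 204 * |s.im| ^ 2 := by
  have hsphere : ∀ w ∈ Metric.sphere s (1 / 4), ‖riemannZeta₁ w‖ ≤ 51 * |s.im| ^ 2 := by
    intro w hw
    have hd : ‖w - s‖ = 1 / 4 := by simpa [dist_eq_norm] using hw
    have hre := (abs_re_le_norm (w - s)).trans_eq hd
    rw [sub_re, abs_le] at hre
    have hs3 : ‖s‖ ≤ 3 / 2 + |s.im| := by
      refine (norm_le_abs_re_add_abs_im s).trans ?_
      rw [abs_of_nonneg (by linarith)]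
      linarith
    have hw1 : ‖w‖ ≤ 3 * |s.im| := by
      have := norm_add_le (w - s) s
      rw [sub_add_cancel] at this
      linarith
    have hw2 : ‖w - 1‖ ≤ 4 * |s.im| := by
      have := norm_sub_le w 1
      rw [norm_one] at this
      linarith
    refine (norm_riemannZeta₁_le_of_quarter_le (by linarith)).trans ?_
    have := mul_le_mul hw1 hw2 (norm_nonneg _) (by positivity)
    nlinarith
  have := Complex.norm_deriv_le_of_forall_mem_sphere_norm_le (by norm_num : (0 : ℝ) < 1 / 4)
    differentiable_riemannZeta₁.diffContOnCl hsphere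
  linarith

theorem norm_riemannZeta₁_sub_le {t δ : ℝ} (ht : 1 ≤ |t|) (hδ : 0 ≤ δ) (hδ1 : δ ≤ 1) :
    ‖riemannZeta₁ (1 / 2 + t * I) - riemannZeta₁ ((1 / 2 + δ : ℝ) + t * I)‖ ≤
      204 * |t| ^ 2 * δ := by
  have hconv : Convex ℝ (Set.Icc (1 / 2 : ℝ) (3 / 2) ×ℂ {t}) :=
    ((convex_Icc _ _).linear_preimage reLm).inter ((convex_singleton t).linear_preimage imLm)
  have h := hconv.norm_image_sub_le_of_norm_deriv_le (𝕜 := ℂ) (f := riemannZeta₁)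
    (C := 204 * |t| ^ 2) (x := (1 / 2 + δ : ℝ) + t * I) (y := 1 / 2 + t * I)
    (fun _ _ => differentiable_riemannZeta₁ _)
    (fun w hw => by
      obtain ⟨⟨h1, h2⟩, h3⟩ := mem_reProdIm.mp hw
      rw [Set.mem_singleton_iff] at h3
      rw [← h3] at ht ⊢
      exact norm_deriv_riemannZeta₁_le h1 h2 ht)
    (by rw [mem_reProdIm]; refine ⟨⟨?_, ?_⟩, ?_⟩ <;> simp <;> linarith)
    (by rw [mem_reProdIm]; refine ⟨⟨?_, ?_⟩, ?_⟩ <;> simp; norm_num)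
  refine h.trans_eq ?_
  congr 1
  have : (1 / 2 + t * I : ℂ) - ((1 / 2 + δ : ℝ) + t * I) = ((-δ : ℝ) : ℂ) := by
    push_cast; ring
  rw [this, norm_real, Real.norm_eq_abs, abs_neg, abs_of_nonneg hδ]

theorem one_sub_norm_sq_cayley {s : ℂ} (hs : s ≠ 0) :
    1 - ‖1 / s - 1‖ ^ 2 = (2 * s.re - 1) / ‖s‖ ^ 2 := by
  have hn : ‖s‖ ≠ 0 := norm_ne_zero_iff.mpr hs
  have h1 : 1 / s - 1 = (1 - s) / s := by field_simp
  have h2 : ‖1 - s‖ ^ 2 = 1 - 2 * s.re + ‖s‖ ^ 2 := by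
    rw [← normSq_eq_norm_sq, ← normSq_eq_norm_sq, normSq_apply, normSq_apply]
    simp
    ring
  rw [h1, norm_div, div_pow, h2]
  field_simp
  ring

theorem exists_norm_riemannZeta_pow_le {k : ℕ} (h : Summable fun n : ℕ => (ell k n) ^ 2) :
    ∃ D : ℝ, 1 ≤ D ∧ ∀ t : ℝ, 1 ≤ |t| →
      ‖riemannZeta ((1 / 2 + (|t| ^ 2)⁻¹ : ℝ) + t * I)‖ ^ k ≤ D * |t| ^ 4 := by
  obtain ⟨B, hB0, hB⟩ := exists_norm_polarCorrection_le k
  have hA : 0 ≤ ∑' n : ℕ, (ell k n) ^ 2 := tsum_nonneg fun _ => sq_nonneg _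
  refine ⟨∑' n : ℕ, (ell k n) ^ 2 + B + 8, by linarith, fun t ht => ?_⟩
  have ht0 : 0 < |t| := by linarith
  have hδ0 : 0 < (|t| ^ 2)⁻¹ := by positivity
  have hδ1 : (|t| ^ 2)⁻¹ ≤ 1 := inv_le_one_of_one_le₀ (one_le_pow₀ ht)
  set s : ℂ := (1 / 2 + (|t| ^ 2)⁻¹ : ℝ) + t * I with hs
  have hre : s.re = 1 / 2 + (|t| ^ 2)⁻¹ := by rw [hs, add_re, ofReal_re]; simp
  have him : s.im = t := by rw [hs, add_im, ofReal_im]; simp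
  have hs0 : s ≠ 0 := fun h0 => by rw [h0, zero_re] at hre; linarith
  have hs1 : s ≠ 1 := fun h0 => by rw [h0] at him; simp at him; rw [← him] at ht0; simp at ht0
  have hspos : 0 < ‖s‖ := norm_pos_iff.mpr hs0
  have hsle : ‖s‖ ≤ 5 / 2 * |t| := by
    have := norm_le_abs_re_add_abs_im s
    rw [hre, him, abs_of_pos (by linarith)] at this
    linarith
  set z : ℂ := 1 / s - 1 with hz
  have hzs : 1 / (1 + z) = s := by rw [hz, add_sub_cancel, one_div_one_div]
  have hzdiv : z = (1 - s) / s := by rw [hz]; field_simp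
  have hz0 : z ≠ 0 := by
    rw [hzdiv]; exact div_ne_zero (sub_ne_zero.mpr hs1.symm) hs0
  have hcay : 1 - ‖z‖ ^ 2 = 2 * (|t| ^ 2)⁻¹ / ‖s‖ ^ 2 := by
    rw [hz, one_sub_norm_sq_cayley hs0, hre]; ring
  have hzlt : ‖z‖ < 1 := by
    have : 0 < 1 - ‖z‖ ^ 2 := by rw [hcay]; positivity
    nlinarith [norm_nonneg z]
  have hzge : 1 / 4 ≤ ‖z‖ := by
    rw [hzdiv, norm_div, le_div_iff₀ hspos]
    have := abs_im_le_norm (1 - s)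
    rw [sub_im, him] at this
    simp at this
    linarith
  have hG := norm_hardy_le_of_summable_sq h hz0 hzlt
  rw [hzs, hcay] at hG
  have hinv : (2 * (|t| ^ 2)⁻¹ / ‖s‖ ^ 2)⁻¹ ≤ 8 * |t| ^ 4 := by
    have e : (2 * (|t| ^ 2)⁻¹ / ‖s‖ ^ 2)⁻¹ = |t| ^ 2 * ‖s‖ ^ 2 / 2 := by field_simp
    have : ‖s‖ ^ 2 ≤ (5 / 2 * |t|) ^ 2 := by gcongr
    rw [e]
    nlinarith [sq_nonneg |t|, mul_le_mul_of_nonneg_left this (sq_nonneg |t|)]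
  have htri := norm_sub_le (riemannZeta s ^ k + polarCorrection k z) (polarCorrection k z)
  rw [add_sub_cancel_right, norm_pow] at htri
  have ht4 : 1 ≤ |t| ^ 4 := one_le_pow₀ ht
  have := hB z hzge hzlt
  nlinarith [mul_le_mul_of_nonneg_left ht4 hA, mul_le_mul_of_nonneg_left ht4 hB0]

theorem lindelofHypothesis_of_summable_sq
    (h : ∀ k : ℕ, 0 < k → Summable fun n : ℕ => (ell k n) ^ 2) : LindelofHypothesis := by
  intro ε hε
  obtain ⟨k, hk⟩ := exists_nat_gt (4 / ε)
  have hkpos : 0 < k := by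
    have : (0 : ℝ) < k := lt_trans (by positivity) hk
    exact_mod_cast this
  obtain ⟨D, hD1, hD⟩ := exists_norm_riemannZeta_pow_le (h k hkpos)
  refine ⟨3 * D + 204, fun t ht => ?_⟩
  have ht0 : 0 < |t| := by linarith
  have hδ0 : 0 < (|t| ^ 2)⁻¹ := by positivity
  have hδ1 : (|t| ^ 2)⁻¹ ≤ 1 := inv_le_one_of_one_le₀ (one_le_pow₀ ht)
  have hpow1 : 1 ≤ |t| ^ ε := Real.one_le_rpow ht hε.le
  have htne : t ≠ 0 := abs_pos.mp ht0
  set s₀ : ℂ := 1 / 2 + t * I with hs₀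
  set s : ℂ := (1 / 2 + (|t| ^ 2)⁻¹ : ℝ) + t * I with hs
  have hre : s.re = 1 / 2 + (|t| ^ 2)⁻¹ := by rw [hs, add_re, ofReal_re]; simp
  have him : s.im = t := by rw [hs, add_im, ofReal_im]; simp
  have him₀ : s₀.im = t := by rw [hs₀]; simp
  have hs1 : s ≠ 1 := fun h0 => by rw [h0] at him; simp at him; exact htne him.symm
  have hs₀1 : s₀ ≠ 1 := fun h0 => by rw [h0] at him₀; simp at him₀; exact htne him₀.symm
  have hzeta : ‖riemannZeta s‖ ≤ D * |t| ^ ε := by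
    refine le_of_pow_le_pow_left₀ hkpos.ne' (by positivity) ((hD t ht).trans ?_)
    rw [mul_pow]
    gcongr
    · exact le_self_pow₀ hD1 hkpos.ne'
    · rw [← Real.rpow_natCast (|t| ^ ε), ← Real.rpow_mul ht0.le, ← Real.rpow_natCast |t| 4]
      refine Real.rpow_le_rpow_of_exponent_le ht ?_
      rw [div_lt_iff₀ hε] at hk
      push_cast
      linarith
  have hdiff := norm_riemannZeta₁_sub_le ht hδ0.le hδ1
  rw [← hs₀, ← hs, mul_assoc, mul_inv_cancel₀ (by positivity), mul_one] at hdiff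
  have htri := norm_sub_norm_le (riemannZeta₁ s₀) (riemannZeta₁ s)
  rw [riemannZeta₁_eq_mul hs1, riemannZeta₁_eq_mul hs₀1] at hdiff htri
  rw [norm_mul (s₀ - 1), norm_mul (s - 1)] at htri
  have hlow : |t| ≤ ‖s₀ - 1‖ := by
    have := abs_im_le_norm (s₀ - 1)
    rwa [sub_im, him₀, one_im, sub_zero] at this
  have hup : ‖s - 1‖ ≤ 3 * |t| := by
    have := norm_le_abs_re_add_abs_im (s - 1)
    rw [sub_re, sub_im, hre, him, one_re, one_im, sub_zero] at this
    have : |1 / 2 + (|t| ^ 2)⁻¹ - 1| ≤ 1 := abs_le.mpr ⟨by linarith, by linarith⟩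
    linarith
  have h1 : |t| * ‖riemannZeta s₀‖ ≤ 3 * |t| * (D * |t| ^ ε) + 204 := by
    have := mul_le_mul_of_nonneg_right hlow (norm_nonneg (riemannZeta s₀))
    have := mul_le_mul hup hzeta (norm_nonneg _) (by positivity)
    linarith
  have h2 : |t| * ‖riemannZeta s₀‖ ≤ |t| * ((3 * D + 204) * |t| ^ ε) := by
    have : 1 ≤ |t| * |t| ^ ε := one_le_mul_of_one_le_of_one_le ht hpow1
    linarith
  exact le_of_mul_le_mul_left h2 ht0

theorem norm_riemannZeta₁_add_half_le {z : ℂ} (hz : 0 ≤ z.re) :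
    ‖riemannZeta₁ (z + 1 / 2)‖ ≤ 4 * ‖z‖ ^ 2 + 5 * ‖z‖ + 3 / 2 := by
  have hhalf : ‖(1 / 2 : ℂ)‖ = 1 / 2 := by norm_num
  have h1 : ‖z + 1 / 2‖ ≤ ‖z‖ + 1 / 2 := (norm_add_le _ _).trans_eq (by rw [hhalf])
  have h2 : ‖z + 1 / 2 - 1‖ ≤ ‖z‖ + 1 / 2 := by
    rw [show z + 1 / 2 - 1 = z - 1 / 2 by ring]
    exact (norm_sub_le _ _).trans_eq (by rw [hhalf])
  have hre : 1 / 4 ≤ (z + 1 / 2).re := by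
    rw [add_re]; norm_num; linarith
  refine (norm_riemannZeta₁_le_of_quarter_le hre).trans ?_
  have := mul_le_mul h1 h2 (norm_nonneg _) (by positivity)
  nlinarith

theorem one_le_norm_add_one {z : ℂ} (hz : 0 ≤ z.re) : 1 ≤ ‖z + 1‖ := by
  have := re_le_norm (z + 1)
  rw [add_re, one_re] at this
  linarith

theorem exists_norm_riemannZeta₁_le (h : LindelofHypothesis) {ε : ℝ} (hε : 0 < ε) :
    ∃ C : ℝ, 0 ≤ C ∧ ∀ z : ℂ, 0 ≤ z.re →
      ‖riemannZeta₁ (z + 1 / 2)‖ ≤ C * ‖z + 1‖ ^ (1 + ε) := by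
  obtain ⟨C, hC⟩ := h ε hε
  refine ⟨|C| + 11, by positivity, fun z hz => ?_⟩
  set f : ℂ → ℂ := fun z => riemannZeta₁ (z + 1 / 2) * (z + 1) ^ ((-(1 + ε) : ℝ) : ℂ) with hf
  have hnorm (w : ℂ) : ‖f w‖ = ‖riemannZeta₁ (w + 1 / 2)‖ * ‖w + 1‖ ^ (-(1 + ε)) := by
    rw [hf, norm_mul, norm_cpow_real]
  have hle_one {w : ℂ} (hw : 0 ≤ w.re) : ‖w + 1‖ ^ (-(1 + ε)) ≤ 1 :=
    Real.rpow_le_one_of_one_le_of_nonpos (one_le_norm_add_one hw) (by linarith)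
  have hdiff {w : ℂ} (hw : 0 ≤ w.re) : DifferentiableAt ℂ f w := by
    refine DifferentiableAt.mul ?_ ?_
    · exact (differentiable_riemannZeta₁ _).comp w (by fun_prop)
    · refine DifferentiableAt.cpow (by fun_prop) (by fun_prop) (Or.inl ?_)
      rw [add_re, one_re]
      linarith
  have hcl : closure {z : ℂ | 0 < z.re} = {z | 0 ≤ z.re} := closure_setOfPred_lt_re 0
  have hmain : ‖f z‖ ≤ |C| + 11 := by
    refine PhragmenLindelof.right_half_plane_of_bounded_on_real ?_ ?_ ?_ ?_ hz
    · refine DifferentiableOn.diffContOnCl fun w hw => ?_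
      rw [hcl] at hw
      exact (hdiff hw).differentiableWithinAt
    · refine ⟨1, by norm_num, 1, IsBigO.of_bound 8 ?_⟩
      refine eventually_inf_principal.mpr (Eventually.of_forall fun w hw => ?_)
      have hw' : 0 ≤ w.re := le_of_lt hw
      rw [Real.rpow_one, one_mul, Real.norm_eq_abs, Real.abs_exp, hnorm]
      have h1 := mul_le_mul (norm_riemannZeta₁_add_half_le hw') (hle_one hw')
        (by positivity) (by positivity)
      have := Real.quadratic_le_exp_of_nonneg (norm_nonneg w)
      nlinarith [norm_nonneg w]
    · refine isBoundedUnder_of_eventually_le (a := 2) ?_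
      filter_upwards [eventually_ge_atTop 0] with x hx
      have hx1 : ((x : ℂ) + 1 / 2) = ((x + 1 / 2 : ℝ) : ℂ) := by push_cast; ring
      have hx2 : ((x : ℂ) + 1) = ((x + 1 : ℝ) : ℂ) := by push_cast; ring
      have hx3 : ((x + 1 / 2 : ℝ) : ℂ) - 1 = ((x - 1 / 2 : ℝ) : ℂ) := by push_cast; ring
      rw [hnorm, hx1, hx2, norm_real, Real.norm_eq_abs, abs_of_pos (by linarith)]
      have hZ : ‖riemannZeta₁ ((x + 1 / 2 : ℝ) : ℂ)‖ ≤ 2 * (x + 1) := by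
        refine (norm_riemannZeta₁_le (by rw [ofReal_re]; linarith)).trans ?_
        rw [hx3, ofReal_re, norm_real, norm_real, Real.norm_eq_abs, Real.norm_eq_abs,
          abs_of_pos (by linarith : 0 < x + 1 / 2), mul_div_cancel_left₀ _ (by linarith)]
        have : |x - 1 / 2| ≤ x + 1 / 2 := abs_le.mpr ⟨by linarith, by linarith⟩
        linarith
      have hpow : (x + 1) ^ (-(1 + ε)) ≤ (x + 1)⁻¹ := by
        rw [← Real.rpow_neg_one]
        exact Real.rpow_le_rpow_of_exponent_le (by linarith) (by linarith)
      refine (mul_le_mul hZ hpow (by positivity) (by positivity)).trans_eq ?_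
      field_simp
    · intro y
      have hre : 0 ≤ ((y : ℂ) * I).re := by simp
      have hny : ‖(y : ℂ) * I‖ = |y| := by simp
      rw [hnorm]
      rcases le_total 1 |y| with hy | hy
      · have hne : (y : ℂ) * I + 1 / 2 ≠ 1 := fun h0 => by
          have := congrArg Complex.im h0
          simp at this
          rw [this, abs_zero] at hy
          linarith
        have hA : ‖(y : ℂ) * I + 1 / 2 - 1‖ ≤ ‖(y : ℂ) * I + 1‖ := by
          refine (sq_le_sq₀ (norm_nonneg _) (norm_nonneg _)).mp ?_
          rw [← normSq_eq_norm_sq, ← normSq_eq_norm_sq, normSq_apply, normSq_apply]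
          norm_num
        have hB : |y| ≤ ‖(y : ℂ) * I + 1‖ := by
          have := abs_im_le_norm ((y : ℂ) * I + 1)
          simpa using this
        have hpos : 0 < ‖(y : ℂ) * I + 1‖ := by linarith
        have hZ : ‖riemannZeta ((y : ℂ) * I + 1 / 2)‖ ≤ |C| * ‖(y : ℂ) * I + 1‖ ^ ε := by
          rw [add_comm]
          refine (hC y hy).trans ?_
          gcongr
          exact le_abs_self C
        have hprod := mul_le_mul hA hZ (norm_nonneg _) (norm_nonneg _)
        rw [riemannZeta₁_eq_mul hne, norm_mul]
        refine (mul_le_mul_of_nonneg_right hprod (by positivity)).trans ?_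
        rw [Real.rpow_neg hpos.le, Real.rpow_add hpos, Real.rpow_one]
        have : 0 < ‖(y : ℂ) * I + 1‖ ^ ε := Real.rpow_pos_of_pos hpos _
        have e : ‖(y : ℂ) * I + 1‖ * (|C| * ‖(y : ℂ) * I + 1‖ ^ ε) *
            (‖(y : ℂ) * I + 1‖ * ‖(y : ℂ) * I + 1‖ ^ ε)⁻¹ = |C| := by field_simp
        rw [e]
        linarith
      · have h1 := mul_le_mul (norm_riemannZeta₁_add_half_le hre) (hle_one hre)
          (by positivity) (by positivity)
        rw [hny] at h1
        nlinarith [abs_nonneg y, abs_nonneg C]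
  rw [hnorm, Real.rpow_neg (norm_nonneg _), ← div_eq_mul_inv,
    div_le_iff₀ (Real.rpow_pos_of_pos (by linarith [one_le_norm_add_one hz]) _)] at hmain
  exact hmain

/-- Under the Lindelöf hypothesis, the square of the generating function of `ell k` is dominated by
a function which is integrable on circles, uniformly in the radius. -/
theorem exists_norm_sq_generating_le (h : LindelofHypothesis) {k : ℕ} (hk : 0 < k) :
    ∃ M : ℝ, 0 ≤ M ∧ ∀ z : ℂ, 1 / 4 ≤ ‖z‖ → ‖z‖ < 1 →
      ‖riemannZeta (1 / (1 + z)) ^ k + polarCorrection k z‖ ^ 2 ≤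
        M * ‖1 + z‖ ^ (-(1 / 2) : ℝ) := by
  obtain ⟨B, hB0, hB⟩ := exists_norm_polarCorrection_le k
  set ε : ℝ := 1 / (4 * k) with hεdef
  have hkR : (0 : ℝ) < k := by exact_mod_cast hk
  have hε : 0 < ε := by positivity
  obtain ⟨C, hC0, hC⟩ := exists_norm_riemannZeta₁_le h hε
  set D : ℝ := 4 * (C * 2 ^ (1 + ε)) with hD
  have hD0 : 0 ≤ D := by positivity
  refine ⟨(D ^ k + 2 * B) ^ 2, by positivity, fun z hz4 hz1 => ?_⟩
  have hz0 : z ≠ 0 := norm_pos_iff.mp (by linarith)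
  have hne : 1 + z ≠ 0 := fun h0 => by
    rw [eq_neg_of_add_eq_zero_right h0, norm_neg, norm_one] at hz1
    exact lt_irrefl _ hz1
  set s : ℂ := 1 / (1 + z) with hs
  have hs0 : s ≠ 0 := one_div_ne_zero hne
  have hspos : 0 < ‖s‖ := norm_pos_iff.mpr hs0
  have hsinv : ‖1 + z‖ = ‖s‖⁻¹ := by rw [hs, norm_div, norm_one, one_div, inv_inv]
  have hzs : 1 / s - 1 = z := by rw [hs, one_div_one_div]; ring
  have hs1z : s - 1 = -(z * s) := by rw [← hzs]; field_simp; ring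
  have hs1 : s ≠ 1 := fun h0 => by
    rw [h0] at hs1z
    simp at hs1z
    exact hz0 hs1z
  have hns1 : ‖s‖ / 4 ≤ ‖s - 1‖ := by
    rw [hs1z, norm_neg, norm_mul]
    nlinarith
  have hre : 1 / 2 ≤ s.re := by
    have h1 := one_sub_norm_sq_cayley hs0
    rw [hzs, eq_div_iff (by positivity)] at h1
    have : 0 ≤ (1 - ‖z‖ ^ 2) * ‖s‖ ^ 2 := by
      have : ‖z‖ ^ 2 ≤ 1 := pow_le_one₀ (norm_nonneg _) hz1.le
      exact mul_nonneg (by linarith) (sq_nonneg _)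
    linarith
  have hZ := hC (s - 1 / 2) (by rw [sub_re]; norm_num; linarith)
  rw [sub_add_cancel, riemannZeta₁_eq_mul hs1, norm_mul] at hZ
  have hshalf : ‖s - 1 / 2 + 1‖ ≤ 2 * ‖s‖ := by
    rw [show s - 1 / 2 + 1 = s + 1 / 2 by ring]
    have h1 := norm_add_le s (1 / 2)
    have h2 := re_le_norm s
    have h3 : ‖(1 / 2 : ℂ)‖ = 1 / 2 := by norm_num
    linarith
  have hzeta : ‖riemannZeta s‖ ≤ D * ‖s‖ ^ ε := by
    have h1 : ‖s‖ / 4 * ‖riemannZeta s‖ ≤ C * (2 * ‖s‖) ^ (1 + ε) := by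
      refine (mul_le_mul_of_nonneg_right hns1 (norm_nonneg _)).trans (hZ.trans ?_)
      gcongr
    rw [Real.mul_rpow zero_le_two hspos.le, Real.rpow_add hspos, Real.rpow_one] at h1
    refine le_of_mul_le_mul_left (h1.trans_eq ?_) (by positivity : 0 < ‖s‖ / 4)
    rw [hD]
    ring
  have hpow : ‖riemannZeta s‖ ^ k ≤ D ^ k * ‖s‖ ^ (1 / 4 : ℝ) := by
    refine (pow_le_pow_left₀ (norm_nonneg _) hzeta k).trans_eq ?_
    rw [mul_pow, ← Real.rpow_natCast (‖s‖ ^ ε), ← Real.rpow_mul hspos.le]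
    congr 2
    rw [hεdef]
    field_simp
  have hhalf : 1 / 2 ≤ ‖s‖ := hre.trans (re_le_norm s)
  have hone : 1 ≤ 2 * ‖s‖ ^ (1 / 4 : ℝ) := by
    have h1 : (1 / 2 : ℝ) ^ (1 : ℝ) ≤ (1 / 2 : ℝ) ^ (1 / 4 : ℝ) :=
      Real.rpow_le_rpow_of_exponent_ge (by norm_num) (by norm_num) (by norm_num)
    have h2 : (1 / 2 : ℝ) ^ (1 / 4 : ℝ) ≤ ‖s‖ ^ (1 / 4 : ℝ) :=
      Real.rpow_le_rpow (by norm_num) hhalf (by norm_num)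
    rw [Real.rpow_one] at h1
    linarith
  have htot : ‖riemannZeta s ^ k + polarCorrection k z‖ ≤
      (D ^ k + 2 * B) * ‖s‖ ^ (1 / 4 : ℝ) := by
    have h1 := norm_add_le (riemannZeta s ^ k) (polarCorrection k z)
    rw [norm_pow] at h1
    have h2 := hB z hz4 hz1
    nlinarith [mul_le_mul_of_nonneg_left hone hB0]
  refine (pow_le_pow_left₀ (norm_nonneg _) htot 2).trans_eq ?_
  rw [mul_pow, ← Real.rpow_natCast (‖s‖ ^ (1 / 4 : ℝ)), ← Real.rpow_mul hspos.le, hsinv,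
    Real.inv_rpow hspos.le, Real.rpow_neg hspos.le, inv_inv]
  norm_num

/-- Parseval's identity for absolutely summable real coefficients. -/
theorem hasSum_sq_of_summable_abs {a : ℕ → ℝ} (ha : Summable fun n => |a n|) :
    HasSum (fun n => a n ^ 2)
      ((2 * π)⁻¹ * ∫ θ in 0..2 * π, ‖∑' n : ℕ, (a n : ℂ) * circleMap 0 1 θ ^ n‖ ^ 2) := by
  have hterm (θ : ℝ) (n : ℕ) : ‖(a n : ℂ) * circleMap 0 1 θ ^ n‖ = |a n| := by
    rw [norm_mul, norm_pow, norm_circleMap_zero, abs_one, one_pow, mul_one, norm_real,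
      Real.norm_eq_abs]
  have hfin (N : ℕ) : ∑ n ∈ Finset.range N, a n ^ 2 =
      (2 * π)⁻¹ * ∫ θ in 0..2 * π,
        ‖∑ n ∈ Finset.range N, (a n : ℂ) * circleMap 0 1 θ ^ n‖ ^ 2 := by
    set p : Polynomial ℂ := ∑ n ∈ Finset.range N, Polynomial.monomial n (a n : ℂ) with hp
    have hcoeff (i : ℕ) : p.coeff i = if i < N then (a i : ℂ) else 0 := by
      simp [hp, Polynomial.finsetSum_coeff, Polynomial.coeff_monomial]
    have hparseval := p.sum_sq_norm_coeff_eq_circleAverage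
    rw [Real.circleAverage_def, smul_eq_mul] at hparseval
    have heval (w : ℂ) : p.eval w = ∑ n ∈ Finset.range N, (a n : ℂ) * w ^ n := by
      simp [hp, Polynomial.eval_finsetSum]
    simp_rw [heval] at hparseval
    rw [← hparseval]
    symm
    refine Finset.sum_subset_zero_on_sdiff (fun i hi => ?_) (fun i hi => ?_) (fun i hi => ?_)
    · by_contra hiN
      rw [Finset.mem_range] at hiN
      rw [Polynomial.mem_support_iff, hcoeff, if_neg hiN] at hi
      exact hi rfl
    · rw [Finset.mem_sdiff, Finset.mem_range, Polynomial.notMem_support_iff, hcoeff] at hi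
      rw [if_pos hi.1, ofReal_eq_zero] at hi
      rw [hi.2, zero_pow two_ne_zero]
    · have hiN : i < N := by
        by_contra hiN
        rw [Polynomial.mem_support_iff, hcoeff, if_neg hiN] at hi
        exact hi rfl
      rw [hcoeff, if_pos hiN, norm_real, Real.norm_eq_abs, sq_abs]
  have hlim : Tendsto (fun N => ∑ n ∈ Finset.range N, a n ^ 2) atTop
      (𝓝 ((2 * π)⁻¹ * ∫ θ in 0..2 * π, ‖∑' n : ℕ, (a n : ℂ) * circleMap 0 1 θ ^ n‖ ^ 2)) := by
    simp_rw [hfin]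
    refine Tendsto.const_mul _ ?_
    refine intervalIntegral.tendsto_integral_filter_of_dominated_convergence
      (fun _ => (∑' n, |a n|) ^ 2) (Eventually.of_forall fun N => ?_)
      (Eventually.of_forall fun N => ae_of_all _ fun θ _ => ?_) intervalIntegrable_const
      (ae_of_all _ fun θ _ => ?_)
    · have : Continuous fun θ : ℝ =>
          ‖∑ n ∈ Finset.range N, (a n : ℂ) * circleMap 0 1 θ ^ n‖ ^ 2 := by
        fun_prop
      exact this.aestronglyMeasurable
    · rw [Real.norm_eq_abs, abs_of_nonneg (sq_nonneg _)]
      refine pow_le_pow_left₀ (norm_nonneg _) ((norm_sum_le _ _).trans ?_) 2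
      simp_rw [hterm]
      exact ha.sum_le_tsum _ fun _ _ => abs_nonneg _
    · have hs : Summable fun n : ℕ => (a n : ℂ) * circleMap 0 1 θ ^ n :=
        Summable.of_norm (by simpa only [hterm] using ha)
      exact (hs.hasSum.tendsto_sum_nat.norm).pow 2
  have hsum : Summable fun n => a n ^ 2 := by
    obtain ⟨c, hc⟩ := hlim.bddAbove_range
    exact summable_of_sum_range_le (fun n => sq_nonneg _) fun N => hc ⟨N, rfl⟩
  rw [← tendsto_nhds_unique hsum.hasSum.tendsto_sum_nat hlim]
  exact hsum.hasSum

theorem abs_sub_pi_div_le_norm_one_add {ρ θ : ℝ} (hρ : 1 / 2 ≤ ρ) (h0 : 0 ≤ θ)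
    (h1 : θ ≤ 2 * π) : |θ - π| / π ≤ ‖1 + ρ * circleMap 0 1 θ‖ := by
  have hcos := Real.cos_le_one_sub_mul_cos_sq (x := θ - π)
    (abs_le.mpr ⟨by linarith, by linarith⟩)
  rw [Real.cos_sub_pi] at hcos
  refine (sq_le_sq₀ (by positivity) (norm_nonneg _)).mp ?_
  have hexp : circleMap 0 1 θ = (Real.cos θ : ℂ) + (Real.sin θ : ℂ) * I := by
    rw [circleMap_zero, exp_mul_I, ofReal_one, one_mul, ofReal_cos, ofReal_sin]
  have hn : ‖1 + ρ * circleMap 0 1 θ‖ ^ 2 = (1 - ρ) ^ 2 + 2 * ρ * (1 + Real.cos θ) := by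
    rw [hexp, ← normSq_eq_norm_sq, normSq_apply]
    simp only [add_re, add_im, one_re, one_im, mul_re, mul_im, ofReal_re, ofReal_im, I_re, I_im]
    linear_combination ρ ^ 2 * Real.sin_sq_add_cos_sq θ
  have hdiv : (|θ - π| / π) ^ 2 = 1 / 2 * (2 / π ^ 2 * (θ - π) ^ 2) := by
    rw [div_pow, sq_abs]
    ring
  have hpos : 0 ≤ 2 / π ^ 2 * (θ - π) ^ 2 := by positivity
  rw [hn, hdiv]
  nlinarith [sq_nonneg (1 - ρ), Real.neg_one_le_cos θ]

theorem intervalIntegrable_abs_sub_pi_rpow :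
    IntervalIntegrable (fun θ : ℝ => |θ - π| ^ (-(1 / 2) : ℝ)) volume 0 (2 * π) := by
  have hr : IntervalIntegrable (fun x : ℝ => x ^ (-(1 / 2) : ℝ)) volume 0 π :=
    intervalIntegral.intervalIntegrable_rpow' (by norm_num)
  have hpos : IntervalIntegrable (fun x : ℝ => |x| ^ (-(1 / 2) : ℝ)) volume 0 π := by
    refine hr.congr fun x hx => ?_
    rw [Set.uIoc_of_le Real.pi_nonneg] at hx
    simp only [abs_of_pos hx.1]
  have hneg : IntervalIntegrable (fun x : ℝ => |x| ^ (-(1 / 2) : ℝ)) volume (-π) 0 := by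
    rw [IntervalIntegrable.iff_comp_neg]
    simp only [abs_neg, neg_neg, neg_zero]
    exact hpos.symm
  have := (hneg.trans hpos).comp_sub_right π
  rwa [neg_add_cancel, ← two_mul] at this

theorem summable_sq_ell_mul_pow (k : ℕ) {ρ : ℝ} (h0 : 0 < ρ) (h1 : ρ < 1) :
    Summable fun n : ℕ => (ell k n) ^ 2 * ρ ^ (2 * n) := by
  have ha : Summable fun n : ℕ => |ell k n * ρ ^ n| := by
    simpa only [abs_mul, abs_pow, abs_of_pos h0] using summable_ell_mul_pow k h0 h1
  refine (hasSum_sq_of_summable_abs ha).summable.congr fun n => ?_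
  rw [mul_pow, ← pow_mul, mul_comm n 2]

/-- Bounded Abel means of a nonnegative sequence bound its partial sums. -/
theorem summable_sq_ell_of_eventually_le {k : ℕ} {c : ℝ}
    (h : ∀ᶠ ρ : ℝ in 𝓝[<] 1, ∑' n : ℕ, (ell k n) ^ 2 * ρ ^ (2 * n) ≤ c) :
    Summable fun n : ℕ => (ell k n) ^ 2 := by
  refine summable_of_sum_range_le (c := c) (fun n => sq_nonneg _) fun N => ?_
  have hlim : Tendsto (fun ρ : ℝ => ∑ n ∈ Finset.range N, (ell k n) ^ 2 * ρ ^ (2 * n))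
      (𝓝[<] 1) (𝓝 (∑ n ∈ Finset.range N, (ell k n) ^ 2)) := by
    refine Tendsto.mono_left (Continuous.tendsto' (by fun_prop) _ _ (by simp))
      nhdsWithin_le_nhds
  refine le_of_tendsto hlim ?_
  filter_upwards [h, Ioo_mem_nhdsLT (zero_lt_one' ℝ)] with ρ hρ hmem
  have := hmem.1
  exact ((summable_sq_ell_mul_pow k hmem.1 hmem.2).sum_le_tsum _
    fun _ _ => by positivity).trans hρ

theorem tendsto_abel_of_summable {k : ℕ} (h : Summable fun n : ℕ => (ell k n) ^ 2) :
    Tendsto (fun ρ : ℝ => ∑' n : ℕ, (ell k n) ^ 2 * ρ ^ (2 * n)) (𝓝[<] (1 : ℝ))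
      (𝓝 (∑' n : ℕ, (ell k n) ^ 2)) := by
  refine tendsto_tsum_of_dominated_convergence h (fun n => ?_) ?_
  · exact Tendsto.mono_left (Continuous.tendsto' (by fun_prop) _ _ (by simp))
      nhdsWithin_le_nhds
  · filter_upwards [Ioo_mem_nhdsLT (zero_lt_one' ℝ)] with ρ hρ n
    have hpow : ρ ^ (2 * n) ≤ 1 := pow_le_one₀ hρ.1.le hρ.2.le
    have hpow0 : 0 ≤ ρ ^ (2 * n) := pow_nonneg hρ.1.le _
    rw [Real.norm_eq_abs, abs_of_nonneg (by positivity)]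
    exact mul_le_of_le_one_right (sq_nonneg _) hpow

theorem summable_sq_ell_of_lindelofHypothesis (h : LindelofHypothesis) {k : ℕ} (hk : 0 < k) :
    Summable fun n : ℕ => (ell k n) ^ 2 := by
  obtain ⟨M, hM0, hM⟩ := exists_norm_sq_generating_le h hk
  refine summable_sq_ell_of_eventually_le (c := (2 * π)⁻¹ *
    ∫ θ in 0..2 * π, M * (π ^ (1 / 2 : ℝ) * |θ - π| ^ (-(1 / 2) : ℝ))) ?_
  filter_upwards [Ioo_mem_nhdsLT (by norm_num : (1 / 2 : ℝ) < 1)] with ρ hρ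
  have hρ0 : 0 < ρ := by linarith [hρ.1]
  have ha : Summable fun n : ℕ => |ell k n * ρ ^ n| := by
    simpa only [abs_mul, abs_pow, abs_of_pos hρ0] using summable_ell_mul_pow k hρ0 hρ.2
  have hP := (hasSum_sq_of_summable_abs ha).tsum_eq
  have hsq (n : ℕ) : (ell k n * ρ ^ n) ^ 2 = (ell k n) ^ 2 * ρ ^ (2 * n) := by
    rw [mul_pow, ← pow_mul, mul_comm n 2]
  simp_rw [hsq] at hP
  rw [hP]
  refine mul_le_mul_of_nonneg_left ((Real.le_norm_self _).trans ?_) (by positivity)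
  refine intervalIntegral.norm_integral_le_of_norm_le (by positivity) ?_
    ((intervalIntegrable_abs_sub_pi_rpow.const_mul _).const_mul _)
  filter_upwards [compl_mem_ae_iff.mpr (measure_singleton π)] with θ hθπ hθ
  have hw : ‖(ρ : ℂ) * circleMap 0 1 θ‖ = ρ := by
    rw [norm_mul, norm_circleMap_zero, abs_one, mul_one, norm_real, Real.norm_eq_abs,
      abs_of_pos hρ0]
  have hw0 : (ρ : ℂ) * circleMap 0 1 θ ≠ 0 := norm_pos_iff.mp (by rw [hw]; exact hρ0)
  have hsum : ∑' n : ℕ, ((ell k n * ρ ^ n : ℝ) : ℂ) * circleMap 0 1 θ ^ n =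
      riemannZeta (1 / (1 + ρ * circleMap 0 1 θ)) ^ k +
        polarCorrection k (ρ * circleMap 0 1 θ) := by
    rw [← (hasSum_ell k hw0 (by rw [hw]; exact hρ.2)).tsum_eq]
    refine tsum_congr fun n => ?_
    push_cast
    ring
  rw [Real.norm_eq_abs, abs_of_nonneg (sq_nonneg _), hsum]
  refine (hM _ (by rw [hw]; linarith [hρ.1]) (by rw [hw]; exact hρ.2)).trans ?_
  refine mul_le_mul_of_nonneg_left ?_ hM0
  have hpos : 0 < |θ - π| := abs_pos.mpr (sub_ne_zero.mpr hθπ)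
  refine (Real.rpow_le_rpow_of_nonpos (by positivity)
    (abs_sub_pi_div_le_norm_one_add hρ.1.le hθ.1.le hθ.2) (by norm_num)).trans_eq ?_
  rw [Real.div_rpow hpos.le Real.pi_nonneg, Real.rpow_neg Real.pi_nonneg, div_inv_eq_mul,
    mul_comm]

theorem stmt5 :
    LindelofHypothesis ↔ ∀ k : ℕ, 0 < k → ∃ L : ℝ,
      Tendsto (fun ρ : ℝ => ∑' n : ℕ, (ell k n) ^ 2 * ρ ^ (2 * n)) (𝓝[<] (1 : ℝ)) (𝓝 L) := by
  refine ⟨fun h k hk => ⟨_, tendsto_abel_of_summable (summable_sq_ell_of_lindelofHypothesis h hk)⟩,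
    fun h => lindelofHypothesis_of_summable_sq fun k hk => ?_⟩
  obtain ⟨L, hL⟩ := h k hk
  exact summable_sq_ell_of_eventually_le
    ((hL.eventually (gt_mem_nhds (lt_add_one L))).mono fun _ hρ => hρ.le)
end
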